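/- arXiv:2112.06688 — 6 statements merged into one kernel-verified Lean document; each statement's English description precedes it below -/
import Mathlib

section
/- Let γ ∈ K× be such that γ ∉ K×² and σ(γ)/γ ∈ K×² for every σ ∈ G, and set L = K(√γ), a Galois extension of F. Then: (i) for every τ ∈ Gal(L/F) restricting to σ2 on K, τ² = id if and only if N_{K/K1}(γ) ∈ K1×²; (ii) for every τ ∈ Gal(L/F) restricting to σ1 on K, τ² = id if and only if N_{K/K2}(γ) ∈ K2×²; (iii) for every τ ∈ Gal(L/F) restricting to σ1σ2 on K, τ² = id if and only if N_{K/K3}(γ) ∈ K3×². -/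
/-!
Let `σ` be one of the three involutions of `K/F`, `r` the square root generating its fixed field
and `τ` a lift of `σ` to `L = K(t)`, `t² = γ`. Since `σ(γ)/γ` is a square in `K`, so is `γ σ(γ)`;
as `(t τ(t))² = γ σ(γ)`, it follows that `t τ(t) = y` for some `y ∈ K` with `y² = γ σ(γ)`.
Applying `τ` gives `τ(t) τ²(t) = σ(y)`, hence `τ²(t) = (σ(y)/y) t`, and `τ² = 1` if and only if
`σ(y) = y`, that is, if and only if `y ∈ F(r)`. As `±y` are the only square roots of `γ σ(γ)`
in `K`, this says that `γ σ(γ)` is a square in `F(r)`.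

`lift_mul_self_eq_one_iff` is this argument for a general involution `σ`; `mem_adjoin_iff_fixed` identifies
`F(r)` with the fixed field of `σ` by Galois theory.
-/

theorem mem_adjoin_iff_fixed {F K : Type} [Field F] [Field K] [Algebra F K]
    [FiniteDimensional F K] [IsGalois F K] (σ : K ≃ₐ[F] K) (r : K) (hr : σ r = r)
    (hfix : ∀ ρ : K ≃ₐ[F] K, ρ r = r → ρ = 1 ∨ ρ = σ) (y : K) :
    y ∈ IntermediateField.adjoin F {r} ↔ σ y = y := by
  constructor
  · intro hy
    have hle : IntermediateField.adjoin F {r} ≤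
        IntermediateField.fixedField (Subgroup.zpowers σ) := by
      rw [IntermediateField.le_iff_le, Subgroup.zpowers_le,
        IntermediateField.mem_fixingSubgroup_iff]
      intro x hx
      induction hx using IntermediateField.adjoin_induction with
      | mem x hx => rw [Set.mem_singleton_iff.1 hx]; exact hr
      | algebraMap x => exact σ.commutes x
      | add x z _ _ hx hz => simp_all
      | inv x _ hx => simp_all
      | mul x z _ _ hx hz => simp_all
    exact (IntermediateField.mem_fixedField_iff _ _).1 (hle hy) σ (Subgroup.mem_zpowers σ)
  · intro hy
    rw [← IsGalois.fixedField_fixingSubgroup (IntermediateField.adjoin F {r}),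
      IntermediateField.mem_fixedField_iff]
    intro ρ hρ
    rw [IntermediateField.mem_fixingSubgroup_iff] at hρ
    rcases hfix ρ (hρ r (IntermediateField.mem_adjoin_simple_self F r)) with rfl | rfl
    · rfl
    · exact hy

theorem lift_mul_self_eq_one_iff {F K L : Type} [Field F] [Field K] [Algebra F K]
    [FiniteDimensional F K] [IsGalois F K] (σ : K ≃ₐ[F] K) (hσ : ∀ x, σ (σ x) = x)
    (r : K) (hr : σ r = r) (hfix : ∀ ρ : K ≃ₐ[F] K, ρ r = r → ρ = 1 ∨ ρ = σ)
    (γ : K) (hγ0 : γ ≠ 0) (hγσ : IsSquare (σ γ / γ))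
    [Field L] [Algebra F L] [Algebra K L] [IsScalarTower F K L]
    (t : L) (ht : t ^ 2 = algebraMap K L γ) (hLgen : IntermediateField.adjoin K {t} = ⊤)
    (τ : L ≃ₐ[F] L) (hτ : ∀ x : K, τ (algebraMap K L x) = algebraMap K L (σ x)) :
    τ * τ = 1 ↔ ∃ x ∈ IntermediateField.adjoin F {r}, γ * σ γ = x ^ 2 := by
  have ht0 : t ≠ 0 := by
    rintro rfl
    apply hγ0
    simpa using ht.symm
  have hτt0 : τ t ≠ 0 := by simpa using ht0
  obtain ⟨y, hy⟩ : ∃ y : K, t * τ t = algebraMap K L y := by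
    obtain ⟨z, hz⟩ := hγσ
    have hz' : σ γ = γ * (z * z) := by rw [← hz]; field_simp
    have hsq : (t * τ t) ^ 2 = (algebraMap K L (γ * z)) ^ 2 := by
      rw [mul_pow, ← map_pow τ, ht, hτ, ← map_mul, ← map_pow, hz']
      congr 1
      ring
    rcases sq_eq_sq_iff_eq_or_eq_neg.1 hsq with h | h
    · exact ⟨_, h⟩
    · exact ⟨-(γ * z), by rw [h, map_neg]⟩
  have hyy : γ * σ γ = y ^ 2 := by
    apply (algebraMap K L).injective
    rw [map_mul, map_pow, ← hy, ← hτ, ← ht, map_pow, mul_pow]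
  have hττ : τ t * τ (τ t) = algebraMap K L (σ y) := by rw [← hτ, ← hy, map_mul]
  have hiff : τ * τ = 1 ↔ σ y = y := by
    constructor
    · intro h
      have h1 : τ (τ t) = t := DFunLike.congr_fun h t
      apply (algebraMap K L).injective
      rw [← hττ, h1, ← hy, mul_comm]
    · intro h
      have h1 : τ (τ t) = t := by
        apply mul_left_cancel₀ hτt0
        rw [hττ, h, ← hy, mul_comm]
      ext x
      have hx : x ∈ IntermediateField.adjoin K {t} := hLgen ▸ IntermediateField.mem_top
      change τ (τ x) = x
      induction hx using IntermediateField.adjoin_induction with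
      | mem x hx => rw [Set.mem_singleton_iff.1 hx]; exact h1
      | algebraMap x => rw [hτ, hτ, hσ]
      | add x z _ _ hx hz => simp_all
      | inv x _ hx => simp_all
      | mul x z _ _ hx hz => simp_all
  rw [hiff, ← mem_adjoin_iff_fixed σ r hr hfix]
  constructor
  · exact fun h => ⟨y, h, hyy⟩
  · rintro ⟨x, hx, hxy⟩
    rcases sq_eq_sq_iff_eq_or_eq_neg.1 (hyy.symm.trans hxy) with h | h
    · rwa [h]
    · rw [h]; exact neg_mem hx

/-- with `F` of characteristic `≠ 2`, `a1, a2 ∈ F×` independent mod squares,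
`K = F(√a1,√a2)`, `Gal(K/F) = {1, σ1, σ2, σ1σ2}`, `K1 = F(√a1)`, `K2 = F(√a2)`,
`K3 = F(√(a1a2))`, and `γ ∈ K× \ K×²` with `σ(γ)/γ ∈ K×²` for all `σ ∈ Gal(K/F)`,
let `L = K(√γ)`, a Galois extension of `F`.  Then for lifts `τ ∈ Gal(L/F)` of `σ2`,
`σ1`, `σ1σ2` respectively, `τ² = id` iff `N_{K/K1}(γ) = γ·σ2(γ) ∈ K1×²`, resp.
`N_{K/K2}(γ) = γ·σ1(γ) ∈ K2×²`, resp. `N_{K/K3}(γ) = γ·σ1σ2(γ) ∈ K3×²`. -/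
theorem stmt5
    (F K : Type) [Field F] [Field K] [Algebra F K] (hchar : (2 : F) ≠ 0)
    (a1 a2 : F) (ha1 : a1 ≠ 0) (ha2 : a2 ≠ 0)
    (hi1 : ¬ IsSquare a1) (hi2 : ¬ IsSquare a2) (hi12 : ¬ IsSquare (a1 * a2))
    (r1 r2 : K) (hr1 : r1 ^ 2 = algebraMap F K a1) (hr2 : r2 ^ 2 = algebraMap F K a2)
    (hgen : IntermediateField.adjoin F {r1, r2} = ⊤)
    [IsGalois F K]
    (σ1 σ2 : K ≃ₐ[F] K)
    (hσ1r1 : σ1 r1 = -r1) (hσ1r2 : σ1 r2 = r2)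
    (hσ2r1 : σ2 r1 = r1) (hσ2r2 : σ2 r2 = -r2)
    (hG : ∀ τ : K ≃ₐ[F] K, τ = 1 ∨ τ = σ1 ∨ τ = σ2 ∨ τ = σ1 * σ2)
    (hG4 : Nat.card (K ≃ₐ[F] K) = 4)
    (γ : K) (hγ0 : γ ≠ 0) (hγns : ¬ IsSquare γ)
    (hγfix : ∀ τ : K ≃ₐ[F] K, IsSquare (τ γ / γ))
    (L : Type) [Field L] [Algebra F L] [Algebra K L] [IsScalarTower F K L]
    (t : L) (ht : t ^ 2 = algebraMap K L γ)
    (hLgen : IntermediateField.adjoin K {t} = ⊤)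
    [IsGalois F L] :
    (∀ τ : L ≃ₐ[F] L, (∀ x : K, τ (algebraMap K L x) = algebraMap K L (σ2 x)) →
      (τ * τ = 1 ↔
        ∃ x ∈ IntermediateField.adjoin F {r1}, γ * σ2 γ = x ^ 2)) ∧
    (∀ τ : L ≃ₐ[F] L, (∀ x : K, τ (algebraMap K L x) = algebraMap K L (σ1 x)) →
      (τ * τ = 1 ↔
        ∃ x ∈ IntermediateField.adjoin F {r2}, γ * σ1 γ = x ^ 2)) ∧
    (∀ τ : L ≃ₐ[F] L, (∀ x : K, τ (algebraMap K L x) = algebraMap K L (σ1 (σ2 x))) →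
      (τ * τ = 1 ↔
        ∃ x ∈ IntermediateField.adjoin F {r1 * r2}, γ * σ1 (σ2 γ) = x ^ 2)) := by
  have h2 : (2 : K) ≠ 0 := by
    have h := (map_ne_zero (algebraMap F K)).2 hchar
    rwa [map_ofNat] at h
  have hne : ∀ x : K, x ≠ 0 → -x ≠ x := by
    intro x hx h
    have h' : 2 * x = 0 := by linear_combination -h
    exact (mul_ne_zero h2 hx) h'
  have hr10 : r1 ≠ 0 := by
    rintro rfl
    apply ha1
    simpa using hr1.symm
  have hr20 : r2 ≠ 0 := by
    rintro rfl
    apply ha2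
    simpa using hr2.symm
  have hn1 := hne r1 hr10
  have hn2 := hne r2 hr20
  have hn12 := hne (r1 * r2) (mul_ne_zero hr10 hr20)
  have hone : ∀ ρ : K ≃ₐ[F] K, ρ r1 = r1 → ρ r2 = r2 → ρ = 1 := by
    intro ρ h h'
    rcases hG ρ with rfl | rfl | rfl | rfl
    · rfl
    · exact absurd (hσ1r1.symm.trans h) hn1
    · exact absurd (hσ2r2.symm.trans h') hn2
    · rw [AlgEquiv.mul_apply, hσ2r1, hσ1r1] at h
      exact absurd h hn1
  have hfin : FiniteDimensional F K := by
    have hint : ∀ (x : K) (a : F), x ^ 2 = algebraMap F K a → IsIntegral F x := fun x a h =>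
      IsIntegral.of_pow two_pos (h ▸ isIntegral_algebraMap)
    have h : FiniteDimensional F (IntermediateField.adjoin F {r1, r2}) := by
      apply IntermediateField.finiteDimensional_adjoin
      rintro x (rfl | rfl)
      · exact hint _ a1 hr1
      · exact hint _ a2 hr2
    rw [hgen] at h
    exact IntermediateField.topEquiv.toLinearEquiv.finiteDimensional
  refine ⟨fun τ hτ => ?_, fun τ hτ => ?_, fun τ hτ => ?_⟩
  · refine lift_mul_self_eq_one_iff σ2 (fun x => ?_) r1 hσ2r1 ?_ γ hγ0 (hγfix σ2) t ht hLgen τ hτ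
    · exact DFunLike.congr_fun (hone (σ2 * σ2) (by simp [*]) (by simp [*])) x
    · intro ρ h
      rcases hG ρ with rfl | rfl | rfl | rfl
      · exact Or.inl rfl
      · exact absurd (hσ1r1.symm.trans h) hn1
      · exact Or.inr rfl
      · rw [AlgEquiv.mul_apply, hσ2r1, hσ1r1] at h
        exact absurd h hn1
  · refine lift_mul_self_eq_one_iff σ1 (fun x => ?_) r2 hσ1r2 ?_ γ hγ0 (hγfix σ1) t ht hLgen τ hτ
    · exact DFunLike.congr_fun (hone (σ1 * σ1) (by simp [*]) (by simp [*])) x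
    · intro ρ h
      rcases hG ρ with rfl | rfl | rfl | rfl
      · exact Or.inl rfl
      · exact Or.inr rfl
      · exact absurd (hσ2r2.symm.trans h) hn2
      · rw [AlgEquiv.mul_apply, hσ2r2, map_neg, hσ1r2] at h
        exact absurd h hn2
  · refine lift_mul_self_eq_one_iff (σ1 * σ2) (fun x => ?_) (r1 * r2) (by simp [*]) ?_ γ hγ0
      (hγfix (σ1 * σ2)) t ht hLgen τ hτ
    · exact DFunLike.congr_fun
        (hone ((σ1 * σ2) * (σ1 * σ2)) (by simp [*]) (by simp [*])) x
    · intro ρ h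
      rcases hG ρ with rfl | rfl | rfl | rfl
      · exact Or.inl rfl
      · rw [map_mul, hσ1r1, hσ1r2, neg_mul] at h
        exact absurd h hn12
      · rw [map_mul, hσ2r1, hσ2r2, mul_neg] at h
        exact absurd h hn12
      · exact Or.inr rfl
end

section
/- For ε1, ε2, ε3 ∈ {0,1}, say that the pattern (ε1, ε2, ε3) is realized if there exists γ ∈ K× with σ(γ)/γ ∈ K×² for every σ ∈ G, N_{K/K1}(γ) ∈ a2^{ε1}·K1×², N_{K/K2}(γ) ∈ a1^{ε2}·K2×², and N_{K/K3}(γ) ∈ a1^{ε3}·K3×². Then: (1,0,0) is realized ⟺ (a1,a2)+(a2,a2) = 0; (0,1,0) is realized ⟺ (a1,a1)+(a1,a2) = 0; (0,0,1) is realized ⟺ (a1,a2) = 0; (1,1,0) is realized ⟺ (a1,a1)+(a2,a2) = 0; (1,0,1) is realized ⟺ (a2,a2) = 0; (0,1,1) is realized ⟺ (a1,a1) = 0; (1,1,1) is realized ⟺ (a1,a1)+(a1,a2)+(a2,a2) = 0, where all equalities are in Br(F). -/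
/-!
A pattern `(ε1, ε2, ε3)` prescribes a 2-cocycle of `G = Gal(K/F)` with values in `{±1}`, that is, a
central extension of `G` by `{±1}`: the squares of the lifts of `σ1, σ2` are `(-1)^ε2, (-1)^ε1` and
their commutator is `(-1)^(ε1+ε2+ε3)`. The pattern is realized exactly when this cocycle becomes
trivial in `H²(G, K×)` (`Biquad.realized_iff`). Indeed, given `γ`, square roots `y1, y2` of
`γ σ1(γ), γ σ2(γ)` give the cochain `u1 = y1/γ, u2 = y2/γ`, the norm conditions being conditions on
how `σ1, σ2, σ1σ2` act on the square roots; conversely `u1², u2²` is a 1-cocycle, and Hilbert 90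
writes it as the coboundary of some `γ`. A trivialization is encoded by the predicate `Dat`.

On the Brauer side, `(a1,α) ⊗ (a2,β)` is split exactly when its generators act on a vector space of
dimension four. The two generators with squares `a1, a2` then make it a one-dimensional `K`-space on
which the other two act semilinearly, hence as `x ↦ u1 σ1(x)` and `x ↦ u2 σ2(x)`; the relations say
that `(u1, u2)` is a trivialization with invariants `(α, 1, β)` (`Biquad.split2_iff_dat`).

Multiplying `u1, u2` by products of `√a1, √a2` transforms the sign invariants of the patterns
`(1,0,0), (0,1,0), (1,1,0), (1,1,1)` into such triples (`dat_scale`). For `(1,1,1)` the result is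
`(a1,a1a2) + (a2,a2)`, and `(a1,a1) + (a1,a2) = (a1,a1a2)` is proved by restricting a representation
to an eigenspace of `i₁ i₂` (`split3_iff_split2`). For the other three patterns one of the invariants
is `1`, and Hilbert 90 (`dat_one`) reduces the question to a norm equation, which is the splitting
criterion for a single quaternion algebra (`split1_iff_norm`).
-/

open Quaternion TensorProduct

/-- `(x,y) = 0` in `Br(F)`: the quaternion algebra `(x,y)` over `F` is split, i.e.
isomorphic to `M₂(F)`. -/
def split1 (F : Type) [Field F] (x y : F) : Prop :=
  Nonempty (ℍ[F, x, y] ≃ₐ[F] Matrix (Fin 2) (Fin 2) F)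

/-- `(x,y) + (z,w) = 0` in `Br(F)`: the sum of the two quaternion classes is represented
by the tensor product, which is trivial in `Br(F)` iff it is split, i.e. `≅ M₄(F)`. -/
def split2 (F : Type) [Field F] (x y z w : F) : Prop :=
  Nonempty ((ℍ[F, x, y] ⊗[F] ℍ[F, z, w]) ≃ₐ[F] Matrix (Fin 4) (Fin 4) F)

/-- `(x,y) + (z,w) + (u,v) = 0` in `Br(F)`: the sum of the three quaternion classes is
represented by the tensor product, which is trivial in `Br(F)` iff it is split,
i.e. `≅ M₈(F)`. -/
def split3 (F : Type) [Field F] (x y z w u v : F) : Prop :=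
  Nonempty ((ℍ[F, x, y] ⊗[F] (ℍ[F, z, w] ⊗[F] ℍ[F, u, v])) ≃ₐ[F]
    Matrix (Fin 8) (Fin 8) F)

/-- The pattern `(ε1, ε2, ε3)` is realized: there is `γ ∈ K×` whose square class is fixed
by `Gal(K/F)` with `N_{K/K1}(γ) = γ·σ2(γ) ∈ a2^{ε1}·K1×²`,
`N_{K/K2}(γ) = γ·σ1(γ) ∈ a1^{ε2}·K2×²` and `N_{K/K3}(γ) = γ·σ1σ2(γ) ∈ a1^{ε3}·K3×²`,
where `K1 = F(√a1)`, `K2 = F(√a2)`, `K3 = F(√(a1a2))`. -/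
def Realized (F K : Type) [Field F] [Field K] [Algebra F K] (a1 a2 : F) (r1 r2 : K)
    (σ1 σ2 : K ≃ₐ[F] K) (ε1 ε2 ε3 : Bool) : Prop :=
  ∃ γ : K, γ ≠ 0 ∧ (∀ τ : K ≃ₐ[F] K, IsSquare (τ γ / γ)) ∧
    (∃ x ∈ IntermediateField.adjoin F {r1},
      γ * σ2 γ = algebraMap F K a2 ^ (cond ε1 1 0 : ℕ) * x ^ 2) ∧
    (∃ x ∈ IntermediateField.adjoin F {r2},
      γ * σ1 γ = algebraMap F K a1 ^ (cond ε2 1 0 : ℕ) * x ^ 2) ∧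
    (∃ x ∈ IntermediateField.adjoin F {r1 * r2},
      γ * σ1 (σ2 γ) = algebraMap F K a1 ^ (cond ε3 1 0 : ℕ) * x ^ 2)

/-! ### Quaternion pairs and splitting -/

/-- The elements `i`, `j` of an `F`-algebra satisfy the defining relations of the quaternion
algebra `(x,y)`. -/
structure QPair (F : Type) {B : Type} [Field F] [Ring B] [Algebra F B] (x y : F) (i j : B) :
    Prop where
  ii : i * i = algebraMap F B x
  jj : j * j = algebraMap F B y
  ij : i * j = -(j * i)

namespace QPair

variable {F B C : Type} [Field F] [Ring B] [Algebra F B] [Ring C] [Algebra F C] {x y : F} {i j : B}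

theorem map (h : QPair F x y i j) (f : B →ₐ[F] C) : QPair F x y (f i) (f j) where
  ii := by rw [← map_mul, h.ii, AlgHom.commutes]
  jj := by rw [← map_mul, h.jj, AlgHom.commutes]
  ij := by rw [← map_mul, h.ij, map_neg, map_mul]

theorem swap (h : QPair F x y i j) : QPair F y x j i where
  ii := h.jj
  jj := h.ii
  ij := by rw [h.ij, neg_neg]

/-- The generators of the quaternion algebra itself. -/
theorem self (x y : F) :
    QPair F x y (⟨0, 1, 0, 0⟩ : ℍ[F, x, y]) (⟨0, 0, 1, 0⟩ : ℍ[F, x, y]) where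
  ii := by ext <;> simp
  jj := by ext <;> simp
  ij := by ext <;> simp

/-- The quaternionic basis attached to a quaternion pair. -/
def basis (h : QPair F x y i j) : QuaternionAlgebra.Basis B x 0 y where
  i := i
  j := j
  k := i * j
  i_mul_i := by rw [h.ii, Algebra.algebraMap_eq_smul_one]; simp
  j_mul_j := by rw [h.jj, Algebra.algebraMap_eq_smul_one]
  i_mul_j := rfl
  j_mul_i := by rw [h.ij]; simp

/-- The homomorphism out of the quaternion algebra determined by a quaternion pair. -/
def hom (h : QPair F x y i j) : ℍ[F, x, y] →ₐ[F] B := h.basis.liftHom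

theorem hom_apply (h : QPair F x y i j) (q : ℍ[F, x, y]) :
    h.hom q = algebraMap F B q.re + q.imI • i + q.imJ • j + q.imK • (i * j) := rfl

theorem commute_hom (h : QPair F x y i j) {c : B} (hi : Commute i c) (hj : Commute j c)
    (q : ℍ[F, x, y]) : Commute (h.hom q) c := by
  rw [hom_apply]
  have h0 : Commute (algebraMap F B q.re) c := Algebra.commutes _ _
  exact ((h0.add_left (hi.smul_left _)).add_left
    (hj.smul_left _)).add_left ((hi.mul_left hj).smul_left _)

/-- If `2, x, y` are invertible, then `1, i, j, ij` are linearly independent over the centralizer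
of `i` and `j`: conjugation by `i` and `j` acts on the four summands through distinct
characters. -/
theorem indep (h : QPair F x y i j) (h2 : (2 : F) ≠ 0) (hx : x ≠ 0) (hy : y ≠ 0)
    {c0 c1 c2 c3 : B}
    (i0 : Commute i c0) (i1 : Commute i c1) (i2 : Commute i c2) (i3 : Commute i c3)
    (j0 : Commute j c0) (j1 : Commute j c1) (j2 : Commute j c2) (j3 : Commute j c3)
    (H : c0 + i * c1 + j * c2 + i * j * c3 = 0) : c0 = 0 ∧ c1 = 0 ∧ c2 = 0 ∧ c3 = 0 := by
  have hii := h.ii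
  have hjj := h.jj
  have hij := h.ij
  have two : ∀ z : B, z + z = 0 → z = 0 := fun z hz => by
    have : (2 : F) • z = 0 := by rw [two_smul]; exact hz
    exact (smul_eq_zero_iff_right h2).1 this
  have ci : ∀ z : B, i * z = 0 → z = 0 := fun z hz => by
    have : x • z = 0 := by
      rw [Algebra.smul_def, ← hii, mul_assoc, hz, mul_zero]
    exact (smul_eq_zero_iff_right hx).1 this
  have cj : ∀ z : B, j * z = 0 → z = 0 := fun z hz => by
    have : y • z = 0 := by
      rw [Algebra.smul_def, ← hjj, mul_assoc, hz, mul_zero]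
    exact (smul_eq_zero_iff_right hy).1 this
  simp only [Commute, SemiconjBy] at i0 i1 i2 i3 j0 j1 j2 j3
  have hji : j * i = -(i * j) := by rw [hij, neg_neg]
  have A : c0 + i * c1 = 0 := by
    apply ci; apply two
    have e : i * (c0 + i * c1 + j * c2 + i * j * c3) + (c0 + i * c1 + j * c2 + i * j * c3) * i
      = i * (c0 + i * c1) + i * (c0 + i * c1) := by
      simp only [mul_add, add_mul, mul_assoc, ← i0, ← i1, ← i2, ← i3]
      rw [← mul_assoc j i, ← mul_assoc j i, hji]
      simp only [mul_assoc, neg_mul, mul_neg]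
      abel
    rw [← e, H]; simp
  have A' : j * (c2 - i * c3) = 0 := by
    rw [← H, add_assoc, A, mul_sub, ← mul_assoc j, hji]; simp [mul_assoc]
  have A'' := cj _ A'
  have c00 : c0 = 0 := by
    apply cj; apply two
    have e : j * (c0 + i * c1) + (c0 + i * c1) * j = j * c0 + j * c0 := by
      simp only [mul_add, add_mul, mul_assoc, ← j0, ← j1]
      rw [← mul_assoc j i, hji]
      simp only [mul_assoc, neg_mul]
      abel
    rw [← e, A]; simp
  have c20 : c2 = 0 := by
    apply cj; apply two
    have e : j * (c2 - i * c3) + (c2 - i * c3) * j = j * c2 + j * c2 := by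
      simp only [mul_sub, sub_mul, mul_assoc, ← j2, ← j3]
      rw [← mul_assoc j i, hji]
      simp only [mul_assoc, neg_mul]
      abel
    rw [← e, A'']; simp
  subst c00 c20
  exact ⟨rfl, ci _ (by simpa using A), rfl, ci _ (by simpa using A'')⟩

theorem hom_injective [Nontrivial B] (h : QPair F x y i j) (h2 : (2 : F) ≠ 0) (hx : x ≠ 0)
    (hy : y ≠ 0) : Function.Injective h.hom := by
  rw [injective_iff_map_eq_zero]
  intro q hq
  rw [hom_apply] at hq
  have cc : ∀ (b : B) (r : F), Commute b (algebraMap F B r) :=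
    fun b r => (Algebra.commutes r b : Commute _ _).symm
  obtain ⟨e0, e1, e2, e3⟩ := h.indep h2 hx hy (c0 := algebraMap F B q.re)
    (c1 := algebraMap F B q.imI) (c2 := algebraMap F B q.imJ) (c3 := algebraMap F B q.imK)
    (cc _ _) (cc _ _) (cc _ _) (cc _ _) (cc _ _) (cc _ _) (cc _ _) (cc _ _)
    (by simpa only [Algebra.smul_def, ← Algebra.commutes] using hq)
  simp only [map_eq_zero_iff _ (algebraMap F B).injective] at e0 e1 e2 e3
  ext <;> simp [e0, e1, e2, e3]

/-- A homomorphism out of `(x,y) ⊗ A` is injective as soon as it is injective on `A`. -/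
theorem lift_injective (h : QPair F x y i j) (h2 : (2 : F) ≠ 0) (hx : x ≠ 0)
    (hy : y ≠ 0) (g : C →ₐ[F] B) (hg : Function.Injective g)
    (hc : ∀ q c, Commute (h.hom q) (g c)) :
    Function.Injective (Algebra.TensorProduct.lift h.hom g hc) := by
  rw [injective_iff_map_eq_zero]
  intro z hz
  -- every element of the tensor product is a combination of `1, i, j, ij` with coefficients in `C`
  have key : ∃ c0 c1 c2 c3 : C, z = (1 : ℍ[F, x, y]) ⊗ₜ[F] c0 + (⟨0, 1, 0, 0⟩ : ℍ[F, x, y]) ⊗ₜ c1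
      + (⟨0, 0, 1, 0⟩ : ℍ[F, x, y]) ⊗ₜ c2 + (⟨0, 0, 0, 1⟩ : ℍ[F, x, y]) ⊗ₜ c3 := by
    clear hz
    induction z using TensorProduct.induction_on with
    | zero => exact ⟨0, 0, 0, 0, by simp⟩
    | tmul q c =>
      refine ⟨q.re • c, q.imI • c, q.imJ • c, q.imK • c, ?_⟩
      simp only [← TensorProduct.smul_tmul, ← TensorProduct.add_tmul]
      congr 1
      ext <;> simp
    | add z w hz hw =>
      obtain ⟨c0, c1, c2, c3, rfl⟩ := hz
      obtain ⟨d0, d1, d2, d3, rfl⟩ := hw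
      refine ⟨c0 + d0, c1 + d1, c2 + d2, c3 + d3, ?_⟩
      simp only [TensorProduct.tmul_add]
      abel
  obtain ⟨c0, c1, c2, c3, rfl⟩ := key
  have hi : h.hom ⟨0, 1, 0, 0⟩ = i := by simp [hom_apply]
  have hj : h.hom ⟨0, 0, 1, 0⟩ = j := by simp [hom_apply]
  have hk : h.hom ⟨0, 0, 0, 1⟩ = i * j := by simp [hom_apply]
  simp only [map_add, Algebra.TensorProduct.lift_tmul, map_one, one_mul, hi, hj, hk] at hz
  have ic : ∀ c, Commute i (g c) := fun c => hi ▸ hc _ c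
  have jc : ∀ c, Commute j (g c) := fun c => hj ▸ hc _ c
  obtain ⟨e0, e1, e2, e3⟩ := h.indep h2 hx hy (ic _) (ic _) (ic _) (ic _) (jc _) (jc _) (jc _)
    (jc _) hz
  rw [map_eq_zero_iff _ hg] at e0 e1 e2 e3
  simp [e0, e1, e2, e3]

end QPair

/-- An injective algebra homomorphism into an algebra isomorphic to `M_n(F)`, from an algebra of
dimension `n²`, exhibits its source as `M_n(F)`. -/
theorem nonempty_equiv_of_injective {F A B : Type} [Field F] [Ring A] [Algebra F A] [Ring B]
    [Algebra F B] [Module.Finite F A] {n : ℕ} (e : B ≃ₐ[F] Matrix (Fin n) (Fin n) F)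
    (hA : Module.finrank F A = n * n) (f : A →ₐ[F] B) (hf : Function.Injective f) :
    Nonempty (A ≃ₐ[F] Matrix (Fin n) (Fin n) F) := by
  have hinj : Function.Injective (e.toAlgHom.comp f) := e.injective.comp hf
  have hfr : Module.finrank F A = Module.finrank F (Matrix (Fin n) (Fin n) F) := by
    rw [hA, Module.finrank_matrix]; simp
  exact ⟨AlgEquiv.ofBijective (e.toAlgHom.comp f) ⟨hinj,
    (LinearMap.injective_iff_surjective_of_finrank_eq_finrank
      (f := (e.toAlgHom.comp f).toLinearMap) hfr).1 hinj⟩⟩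

/-- An algebra isomorphic to `M₂(F)` contains a quaternion pair of type `(x,y)` exactly when the
quaternion algebra `(x,y)` is split; `split2_iff` and `split3_iff` are the analogues for tensor
products. -/
theorem split1_iff {F B : Type} [Field F] [Ring B] [Algebra F B]
    (e : B ≃ₐ[F] Matrix (Fin 2) (Fin 2) F) (h2 : (2 : F) ≠ 0) {x y : F} (hx : x ≠ 0) (hy : y ≠ 0) :
    split1 F x y ↔ ∃ i j : B, QPair F x y i j := by
  have : Nontrivial B := e.surjective.nontrivial
  constructor
  · rintro ⟨f⟩
    exact ⟨_, _, (QPair.self x y).map ((f.trans e.symm).toAlgHom)⟩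
  · rintro ⟨i, j, h⟩
    exact nonempty_equiv_of_injective e (QuaternionAlgebra.finrank_eq_four _ _ _) h.hom
      (h.hom_injective h2 hx hy)

/-- `i, j` and `k, l` are two commuting quaternion pairs. -/
structure QPair2 (F : Type) {B : Type} [Field F] [Ring B] [Algebra F B] (x y z w : F)
    (i j k l : B) : Prop where
  p : QPair F x y i j
  q : QPair F z w k l
  ik : Commute i k
  il : Commute i l
  jk : Commute j k
  jl : Commute j l

namespace QPair2

variable {F B C : Type} [Field F] [Ring B] [Algebra F B] [Ring C] [Algebra F C]
  {x y z w : F} {i j k l : B}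

theorem map (h : QPair2 F x y z w i j k l) (f : B →ₐ[F] C) :
    QPair2 F x y z w (f i) (f j) (f k) (f l) :=
  ⟨h.p.map f, h.q.map f, h.ik.map f, h.il.map f, h.jk.map f, h.jl.map f⟩

theorem commute (h : QPair2 F x y z w i j k l) (q : ℍ[F, x, y]) (r : ℍ[F, z, w]) :
    Commute (h.p.hom q) (h.q.hom r) :=
  h.p.commute_hom (h.q.commute_hom h.ik.symm h.il.symm r).symm
    (h.q.commute_hom h.jk.symm h.jl.symm r).symm q

/-- The homomorphism out of the tensor product of two quaternion algebras determined by two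
commuting quaternion pairs. -/
noncomputable def hom (h : QPair2 F x y z w i j k l) : ℍ[F, x, y] ⊗[F] ℍ[F, z, w] →ₐ[F] B :=
  Algebra.TensorProduct.lift h.p.hom h.q.hom h.commute

theorem hom_injective [Nontrivial B] (h : QPair2 F x y z w i j k l) (h2 : (2 : F) ≠ 0)
    (hx : x ≠ 0) (hy : y ≠ 0) (hz : z ≠ 0) (hw : w ≠ 0) : Function.Injective h.hom :=
  h.p.lift_injective h2 hx hy _ (h.q.hom_injective h2 hz hw) _

theorem commute_hom (h : QPair2 F x y z w i j k l) {c : B} (hi : Commute i c) (hj : Commute j c)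
    (hk : Commute k c) (hl : Commute l c) (t : ℍ[F, x, y] ⊗[F] ℍ[F, z, w]) :
    Commute (h.hom t) c := by
  induction t using TensorProduct.induction_on with
  | zero => rw [map_zero]; exact Commute.zero_left c
  | tmul q r =>
    rw [hom, Algebra.TensorProduct.lift_tmul]
    exact (h.p.commute_hom hi hj q).mul_left (h.q.commute_hom hk hl r)
  | add a b ha hb => rw [map_add]; exact ha.add_left hb

end QPair2

/-- The generators of a tensor product of two quaternion algebras. -/
theorem QPair2.self {F : Type} [Field F] (x y z w : F) :
    ∃ i j k l : ℍ[F, x, y] ⊗[F] ℍ[F, z, w], QPair2 F x y z w i j k l := by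
  refine ⟨_, _, _, _, (QPair.self x y).map Algebra.TensorProduct.includeLeft,
    (QPair.self z w).map Algebra.TensorProduct.includeRight, ?_, ?_, ?_, ?_⟩ <;>
  simp [Commute, SemiconjBy]

theorem split2_iff {F B : Type} [Field F] [Ring B] [Algebra F B]
    (e : B ≃ₐ[F] Matrix (Fin 4) (Fin 4) F) (h2 : (2 : F) ≠ 0) {x y z w : F} (hx : x ≠ 0)
    (hy : y ≠ 0) (hz : z ≠ 0) (hw : w ≠ 0) :
    split2 F x y z w ↔ ∃ i j k l : B, QPair2 F x y z w i j k l := by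
  have : Nontrivial B := e.surjective.nontrivial
  constructor
  · rintro ⟨f⟩
    obtain ⟨i, j, k, l, h⟩ := QPair2.self x y z w
    exact ⟨_, _, _, _, h.map ((f.trans e.symm).toAlgHom)⟩
  · rintro ⟨i, j, k, l, h⟩
    refine nonempty_equiv_of_injective e ?_ h.hom (h.hom_injective h2 hx hy hz hw)
    rw [Module.finrank_tensorProduct, QuaternionAlgebra.finrank_eq_four,
      QuaternionAlgebra.finrank_eq_four]

theorem split3_iff {F B : Type} [Field F] [Ring B] [Algebra F B]
    (e : B ≃ₐ[F] Matrix (Fin 8) (Fin 8) F) (h2 : (2 : F) ≠ 0) {x y z w u v : F} (hx : x ≠ 0)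
    (hy : y ≠ 0) (hz : z ≠ 0) (hw : w ≠ 0) (hu : u ≠ 0) (hv : v ≠ 0) :
    split3 F x y z w u v ↔ ∃ i j k l m n : B, QPair F x y i j ∧ QPair2 F z w u v k l m n ∧
      (∀ c, c = k ∨ c = l ∨ c = m ∨ c = n → Commute i c ∧ Commute j c) := by
  have : Nontrivial B := e.surjective.nontrivial
  constructor
  · rintro ⟨f⟩
    obtain ⟨k, l, m, n, h⟩ := QPair2.self z w u v
    have h1 := (QPair.self x y).map (Algebra.TensorProduct.includeLeft :
      ℍ[F, x, y] →ₐ[F] ℍ[F, x, y] ⊗[F] (ℍ[F, z, w] ⊗[F] ℍ[F, u, v]))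
    have h2 := h.map (Algebra.TensorProduct.includeRight :
      _ →ₐ[F] ℍ[F, x, y] ⊗[F] (ℍ[F, z, w] ⊗[F] ℍ[F, u, v]))
    refine ⟨_, _, _, _, _, _, h1.map ((f.trans e.symm).toAlgHom),
      h2.map ((f.trans e.symm).toAlgHom), ?_⟩
    rintro c (rfl | rfl | rfl | rfl) <;> constructor <;> apply Commute.map <;>
    simp [Commute, SemiconjBy]
  · rintro ⟨i, j, k, l, m, n, h, h', hc⟩
    have hcomm : ∀ q t, Commute (h.hom q) (h'.hom t) := fun q t =>
      h.commute_hom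
        (h'.commute_hom (hc k (by simp)).1.symm (hc l (by simp)).1.symm (hc m (by simp)).1.symm
          (hc n (by simp)).1.symm t).symm
        (h'.commute_hom (hc k (by simp)).2.symm (hc l (by simp)).2.symm (hc m (by simp)).2.symm
          (hc n (by simp)).2.symm t).symm q
    refine nonempty_equiv_of_injective e ?_ _
      (h.lift_injective h2 hx hy h'.hom (h'.hom_injective h2 hz hw hu hv) hcomm)
    rw [Module.finrank_tensorProduct, Module.finrank_tensorProduct,
      QuaternionAlgebra.finrank_eq_four, QuaternionAlgebra.finrank_eq_four,
      QuaternionAlgebra.finrank_eq_four]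

/-! ### Relations between split tensor products -/

/-- For `x` a nonsquare, `(x,y)` splits exactly when `y` is a norm from `F(√x)`. -/
theorem split1_iff_norm {F : Type} [Field F] (h2 : (2 : F) ≠ 0) {x y : F} (hx : ¬ IsSquare x)
    (hy : y ≠ 0) : split1 F x y ↔ ∃ s t : F, s ^ 2 - x * t ^ 2 = y := by
  have hx0 : x ≠ 0 := fun h => hx (h ▸ IsSquare.zero)
  rw [split1_iff AlgEquiv.refl h2 hx0 hy]
  constructor
  · rintro ⟨i, j, h⟩
    have e1 := congrFun (congrFun h.ii 0) 0
    have e2 := congrFun (congrFun h.jj 0) 0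
    have e3 := congrFun (congrFun h.ij 0) 0
    simp only [Matrix.mul_apply, Fin.sum_univ_two, Matrix.neg_apply, Matrix.algebraMap_matrix_apply,
      if_true, Algebra.algebraMap_self, RingHom.id_apply] at e1 e2 e3
    have hc : i 1 0 ≠ 0 := fun hc => hx ⟨i 0 0, by rw [← e1, hc]; ring⟩
    -- `j e₀ = s e₀ + t (i e₀)`, since `e₀, i e₀` is a basis of `F²`
    refine ⟨j 0 0 - j 1 0 / i 1 0 * i 0 0, j 1 0 / i 1 0, ?_⟩
    rw [← e1, ← e2]
    field_simp
    linear_combination (-(j 1 0) * i 1 0) * e3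
  · rintro ⟨s, t, h⟩
    refine ⟨!![0, x; 1, 0], !![s, -x * t; t, -s], ?_, ?_, ?_⟩
    · ext a b; fin_cases a <;> fin_cases b <;>
        simp [Matrix.mul_apply, Matrix.algebraMap_matrix_apply]
    · ext a b; fin_cases a <;> fin_cases b <;>
        simp [Matrix.mul_apply, Matrix.algebraMap_matrix_apply, ← h] <;> ring
    · ext a b; fin_cases a <;> fin_cases b <;>
        simp [Matrix.mul_apply] <;> ring

theorem nonempty_end_equiv {F V : Type} [Field F] [AddCommGroup V] [Module F V] {n : ℕ}
    [NeZero n] (hV : Module.finrank F V = n) :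
    Nonempty (Module.End F V ≃ₐ[F] Matrix (Fin n) (Fin n) F) := by
  have : Module.Finite F V := Module.finite_of_finrank_pos (by rw [hV]; exact NeZero.pos n)
  exact ⟨algEquivMatrix (Module.finBasisOfFinrankEq F V hV)⟩

theorem split2_swap {F : Type} [Field F] (h2 : (2 : F) ≠ 0) {x y z w : F} (hx : x ≠ 0)
    (hy : y ≠ 0) (hz : z ≠ 0) (hw : w ≠ 0) : split2 F x y z w ↔ split2 F x y w z := by
  rw [split2_iff AlgEquiv.refl h2 hx hy hz hw, split2_iff AlgEquiv.refl h2 hx hy hw hz]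
  constructor <;>
  · rintro ⟨i, j, k, l, h⟩
    exact ⟨i, j, l, k, h.p, h.q.swap, h.il, h.ik, h.jl, h.jk⟩

theorem QPair2.restrict {F V : Type} [Field F] [AddCommGroup V] [Module F V] {x y z w : F}
    {i j k l : Module.End F V} (h : QPair2 F x y z w i j k l) (W : Submodule F V)
    (hi : ∀ v ∈ W, i v ∈ W) (hj : ∀ v ∈ W, j v ∈ W) (hk : ∀ v ∈ W, k v ∈ W)
    (hl : ∀ v ∈ W, l v ∈ W) :
    QPair2 F x y z w (i.restrict hi) (j.restrict hj) (k.restrict hk) (l.restrict hl) := by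
  refine ⟨⟨?_, ?_, ?_⟩, ⟨?_, ?_, ?_⟩, ?_, ?_, ?_, ?_⟩ <;>
    refine LinearMap.ext fun v => Subtype.ext ?_
  · exact LinearMap.congr_fun h.p.ii v
  · exact LinearMap.congr_fun h.p.jj v
  · exact LinearMap.congr_fun h.p.ij v
  · exact LinearMap.congr_fun h.q.ii v
  · exact LinearMap.congr_fun h.q.jj v
  · exact LinearMap.congr_fun h.q.ij v
  · exact LinearMap.congr_fun h.ik v
  · exact LinearMap.congr_fun h.il v
  · exact LinearMap.congr_fun h.jk v
  · exact LinearMap.congr_fun h.jl v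

/-- The combination of two commuting pairs of types `(x,y)` and `(x,z)` into one of type `(x,yz)`,
and its interaction with `i₁ i₂`. -/
theorem QPair.merge {F B : Type} [Field F] [Ring B] [Algebra F B] {x y z u w : F}
    {i1 j1 i2 j2 i3 j3 : B} (h1 : QPair F x y i1 j1) (h23 : QPair2 F x z u w i2 j2 i3 j3)
    (c1 : Commute i1 i2) (c1' : Commute j1 i2) (c2 : Commute i1 j2) (c2' : Commute j1 j2)
    (c3 : Commute i1 i3) (c3' : Commute j1 i3) (c4 : Commute i1 j3) (c4' : Commute j1 j3) :
    QPair2 F x (y * z) u w i1 (j1 * j2) i3 j3 ∧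
    (i1 * i2) * (i1 * i2) = algebraMap F B (x * x) ∧
    (i1 * i2) * j2 = -(j2 * (i1 * i2)) ∧ Commute (i1 * i2) (j1 * j2) := by
  have hPj : (i1 * i2) * j2 = -(j2 * (i1 * i2)) := by
    rw [mul_assoc, h23.p.ij, mul_neg, ← mul_assoc, c2.eq, mul_assoc]
  refine ⟨⟨⟨h1.ii, ?_, ?_⟩, h23.q, c3, c4, c3'.mul_left h23.jk, c4'.mul_left h23.jl⟩, ?_, hPj, ?_⟩
  · rw [c2'.symm.mul_mul_mul_comm, h1.jj, h23.p.jj, map_mul]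
  · rw [← mul_assoc, h1.ij, neg_mul, mul_assoc, c2.eq, mul_assoc]
  · rw [c1.symm.mul_mul_mul_comm, h1.ii, h23.p.ii, map_mul]
  · have : (i1 * i2) * j1 = -(j1 * (i1 * i2)) := by
      rw [mul_assoc, ← c1'.eq, ← mul_assoc, h1.ij, neg_mul, mul_assoc]
    change (i1 * i2) * (j1 * j2) = j1 * j2 * (i1 * i2)
    rw [← mul_assoc, this, neg_mul, mul_assoc, hPj, mul_neg, neg_neg, mul_assoc]

/-- The identity `(x,y) + (x,z) = (x,yz)` in the presence of a further summand `(u,w)`. In a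
representation of the triple product on `F⁸`, the involution `x⁻¹ i₁ i₂` has a four-dimensional
eigenspace, on which `i₁, j₁ j₂` and the third pair act. -/
theorem split3_iff_split2 {F : Type} [Field F] (h2 : (2 : F) ≠ 0) {x y z u w : F} (hx : x ≠ 0)
    (hy : y ≠ 0) (hz : z ≠ 0) (hu : u ≠ 0) (hw : w ≠ 0) :
    split3 F x y x z u w ↔ split2 F x (y * z) u w := by
  constructor
  · intro h
    obtain ⟨e⟩ := nonempty_end_equiv (F := F) (V := Fin 8 → F) (n := 8) (by simp)
    rw [split3_iff e h2 hx hy hx hz hu hw] at h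
    obtain ⟨i1, j1, i2, j2, i3, j3, h1, h23, hc⟩ := h
    obtain ⟨c1, c1'⟩ := hc i2 (by simp)
    obtain ⟨c2, c2'⟩ := hc j2 (by simp)
    obtain ⟨c3, c3'⟩ := hc i3 (by simp)
    obtain ⟨c4, c4'⟩ := hc j3 (by simp)
    obtain ⟨hQ, hPP, hPj, k2⟩ := QPair.merge h1 h23 c1 c1' c2 c2' c3 c3' c4 c4'
    set P := i1 * i2 with hP
    have hPP' : ∀ v, P (P v) = (x * x) • v := fun v => LinearMap.congr_fun hPP v
    have hPj' : ∀ v, P (j2 v) = -(j2 (P v)) := fun v => LinearMap.congr_fun hPj v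
    have hjj' : ∀ v, j2 (j2 v) = z • v := fun v => LinearMap.congr_fun h23.p.jj v
    let W := Module.End.eigenspace P x
    let W' := Module.End.eigenspace P (-x)
    have mW : ∀ v, v ∈ W ↔ P v = x • v := fun v => Module.End.mem_eigenspace_iff
    have mW' : ∀ v, v ∈ W' ↔ P v = (-x) • v := fun v => Module.End.mem_eigenspace_iff
    have hcompl : IsCompl W W' := by
      constructor
      · rw [Submodule.disjoint_def]
        intro v hv hv'
        rw [mW] at hv
        rw [mW', hv] at hv'
        have : (2 * x) • v = 0 := by
          rw [two_mul, add_smul]; nth_rewrite 1 [hv']; simp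
        exact (smul_eq_zero_iff_right (mul_ne_zero h2 hx)).1 this
      · rw [codisjoint_iff, eq_top_iff]
        intro v _
        rw [Submodule.mem_sup]
        refine ⟨(2 : F)⁻¹ • (v + x⁻¹ • P v), ?_, (2 : F)⁻¹ • (v - x⁻¹ • P v), ?_, ?_⟩
        · rw [mW]
          simp only [map_smul, map_add, hPP', smul_smul, smul_add]
          rw [add_comm]
          congr 2 <;> field_simp
        · rw [mW']
          simp only [map_smul, map_sub, hPP', smul_smul, smul_sub]
          rw [sub_eq_neg_add, ← neg_smul, sub_eq_add_neg, ← neg_smul]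
          congr 2 <;> field_simp
        · rw [← smul_add, add_add_sub_cancel, ← two_smul F v, smul_smul, inv_mul_cancel₀ h2,
            one_smul]
    have jW : ∀ v ∈ W, j2 v ∈ W' := fun v hv => by
      rw [mW', hPj', (mW v).1 hv]; simp
    have jW' : ∀ v ∈ W', j2 v ∈ W := fun v hv => by
      rw [mW, hPj', (mW' v).1 hv]; simp
    have jinj : Function.Injective j2 := by
      intro v v' hv
      have := congrArg j2 hv
      rw [hjj', hjj'] at this
      exact smul_right_injective _ hz this
    have le1 : Module.finrank F W ≤ Module.finrank F W' :=
      LinearMap.finrank_le_finrank_of_injective (f := j2.restrict jW) fun a b hab =>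
        Subtype.ext (jinj (congrArg Subtype.val hab))
    have le2 : Module.finrank F W' ≤ Module.finrank F W :=
      LinearMap.finrank_le_finrank_of_injective (f := j2.restrict jW') fun a b hab =>
        Subtype.ext (jinj (congrArg Subtype.val hab))
    have hsum := Submodule.finrank_add_eq_of_isCompl hcompl
    rw [Module.finrank_fin_fun] at hsum
    have hW : Module.finrank F W = 4 := by omega
    have inv : ∀ c : Module.End F (Fin 8 → F), Commute P c → ∀ v ∈ W, c v ∈ W := by
      intro c hc v hv
      rw [mW] at hv ⊢
      have : P (c v) = c (P v) := LinearMap.congr_fun hc.eq v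
      rw [this, hv, map_smul]
    have k1 : Commute P i1 := (Commute.refl i1).mul_left c1.symm
    have k3 : Commute P i3 := c3.mul_left h23.ik
    have k4 : Commute P j3 := c4.mul_left h23.il
    obtain ⟨e'⟩ := nonempty_end_equiv hW
    rw [split2_iff (B := Module.End F W) e' h2 hx (mul_ne_zero hy hz) hu hw]
    exact ⟨_, _, _, _, hQ.restrict W (inv _ k1) (inv _ k2) (inv _ k3) (inv _ k4)⟩
  · intro h
    obtain ⟨e⟩ := nonempty_end_equiv (F := F) (V := Fin 4 → F) (n := 4) (by simp)
    obtain ⟨e'⟩ := nonempty_end_equiv (F := F) (V := (Fin 4 → F) × (Fin 4 → F)) (n := 8)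
      (by simp)
    rw [split2_iff e h2 hx (mul_ne_zero hy hz) hu hw] at h
    rw [split3_iff e' h2 hx hy hx hz hu hw]
    obtain ⟨i, j, k, l, h⟩ := h
    have hii : ∀ v, i (i v) = x • v := fun v => LinearMap.congr_fun h.p.ii v
    have hjj : ∀ v, j (j v) = (y * z) • v := fun v => LinearMap.congr_fun h.p.jj v
    have hij : ∀ v, i (j v) = -(j (i v)) := fun v => LinearMap.congr_fun h.p.ij v
    have hkk : ∀ v, k (k v) = u • v := fun v => LinearMap.congr_fun h.q.ii v
    have hll : ∀ v, l (l v) = w • v := fun v => LinearMap.congr_fun h.q.jj v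
    have hkl : ∀ v, k (l v) = -(l (k v)) := fun v => LinearMap.congr_fun h.q.ij v
    have hik : ∀ v, i (k v) = k (i v) := fun v => LinearMap.congr_fun h.ik v
    have hil : ∀ v, i (l v) = l (i v) := fun v => LinearMap.congr_fun h.il v
    have hjk : ∀ v, j (k v) = k (j v) := fun v => LinearMap.congr_fun h.jk v
    have hjl : ∀ v, j (l v) = l (j v) := fun v => LinearMap.congr_fun h.jl v
    -- on `V ⊕ V`, the second pair is `i ⊕ -i` and `(v, w) ↦ (z w, v)`; the first one is `i ⊕ i`
    -- and the operator `j₁` for which `j₁ j₂ = j ⊕ j`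
    refine ⟨i.prodMap i,
      (j ∘ₗ LinearMap.snd F _ _).prod (z⁻¹ • (j ∘ₗ LinearMap.fst F _ _)),
      i.prodMap (-i),
      (z • LinearMap.snd F _ _).prod (LinearMap.fst F _ _),
      k.prodMap k, l.prodMap l, ⟨?_, ?_, ?_⟩, ⟨⟨?_, ?_, ?_⟩, ⟨?_, ?_, ?_⟩, ?_, ?_, ?_, ?_⟩, ?_⟩
    all_goals first
      | (rintro c (rfl | rfl | rfl | rfl) <;> constructor <;>
          refine LinearMap.ext fun ⟨v, v'⟩ => Prod.ext ?_ ?_ <;>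
          simp [hij, hik, hil, hjk, hjl, smul_smul, hz])
      | (refine LinearMap.ext fun ⟨v, v'⟩ => Prod.ext ?_ ?_ <;>
          simp [hii, hjj, hij, hkk, hll, hkl, hik, hil, smul_smul])
    all_goals congr 1; field_simp

/-! ### The biquadratic extension -/

/-- The facts about the biquadratic extension `K = F(√a1, √a2)` used below; they are symmetric in
the two indices. -/
structure Biquad (F K : Type) [Field F] [Field K] [Algebra F K] (a1 a2 : F) (r1 r2 : K)
    (σ1 σ2 : K ≃ₐ[F] K) : Prop where
  two : (2 : F) ≠ 0
  nsq1 : ¬ IsSquare a1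
  nsq2 : ¬ IsSquare a2
  sq1 : r1 ^ 2 = algebraMap F K a1
  sq2 : r2 ^ 2 = algebraMap F K a2
  s11 : σ1 r1 = -r1
  s12 : σ1 r2 = r2
  s21 : σ2 r1 = r1
  s22 : σ2 r2 = -r2
  coord : ∀ x : K, ∃ p q s t : F, x = algebraMap F K p + algebraMap F K q * r1 +
    algebraMap F K s * r2 + algebraMap F K t * (r1 * r2)
  finrank : Module.finrank F K = 4

/-- A trivialization of a 2-cocycle of the Klein four-group with values in `K×`: elements `u1, u2`
playing the role of the values of a cochain at `σ1, σ2`, with `α, β, κ` recording the squares of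
the lifts of `σ1, σ2` and their commutator. -/
def Dat {F K : Type} [Field F] [Field K] [Algebra F K] (σ1 σ2 : K ≃ₐ[F] K) (α κ β : K) : Prop :=
  ∃ u1 u2 : K, u1 * σ1 u1 = α ∧ u2 * σ2 u2 = β ∧ u1 * σ1 u2 = κ * (u2 * σ2 u1)

/-- The sign `(-1)^b`. -/
def sgn (K : Type) [Field K] (b : Bool) : K := cond b (-1) 1

theorem sgn_sq (K : Type) [Field K] (b : Bool) : sgn K b * sgn K b = 1 := by
  cases b <;> simp [sgn]

section Elementary

variable {F K : Type} [Field F] [Field K] [Algebra F K]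

theorem mem_adjoin_fixed (σ : K ≃ₐ[F] K) {r x : K} (hr : σ r = r)
    (hx : x ∈ IntermediateField.adjoin F {r}) : σ x = x := by
  induction hx using IntermediateField.adjoin_induction with
  | mem y hy => rw [Set.mem_singleton_iff.1 hy, hr]
  | algebraMap y => exact σ.commutes y
  | add y z _ _ hy hz => rw [map_add, hy, hz]
  | inv y _ hy => rw [map_inv₀, hy]
  | mul y z _ _ hy hz => rw [map_mul, hy, hz]

/-- If `E` is the fixed field of `σ` and `σ r = -r`, `r² = a`, then `c ∈ a^ε E²` exactly when `c`
has a square root `y` with `σ y = (-1)^ε y`. -/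
theorem sqrt_iff (σ : K ≃ₐ[F] K) {r : K} {a : F} (hr0 : r ≠ 0) (hr : σ r = -r)
    (hra : r ^ 2 = algebraMap F K a) (E : IntermediateField F K) (hE : ∀ x, x ∈ E ↔ σ x = x)
    (ε : Bool) (c : K) :
    (∃ x ∈ E, c = algebraMap F K a ^ (cond ε 1 0 : ℕ) * x ^ 2) ↔
      ∃ y, σ y = sgn K ε * y ∧ c = y ^ 2 := by
  cases ε
  · simp [sgn, hE]
  · simp only [sgn, cond_true, pow_one, hE, neg_mul, one_mul]
    constructor
    · rintro ⟨x, hx, rfl⟩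
      exact ⟨r * x, by rw [map_mul, hr, hx]; ring, by rw [← hra]; ring⟩
    · rintro ⟨y, hy, rfl⟩
      refine ⟨y / r, by rw [map_div₀, hr, hy, neg_div_neg_eq], ?_⟩
      rw [← hra]; field_simp

/-- Hilbert 90 for an involution, with an explicit solution. -/
theorem hilbert90 (σ : K ≃ₐ[F] K) (hσ : ∀ x, σ (σ x) = x) {r : K} (hr0 : r ≠ 0) (hr : σ r = -r)
    {c : K} (hc : c * σ c = 1) : ∃ t, t ≠ 0 ∧ σ t = c * t ∧ (t = 1 + σ c ∨ t = r) := by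
  by_cases h : 1 + σ c = 0
  · refine ⟨r, hr0, ?_, Or.inr rfl⟩
    have h1 := congrArg σ h
    rw [map_add, map_one, hσ, map_zero] at h1
    rw [hr]; linear_combination (-r) * h1
  · refine ⟨1 + σ c, h, ?_, Or.inl rfl⟩
    rw [map_add, map_one, hσ]; linear_combination -hc

end Elementary

namespace Biquad

variable {F K : Type} [Field F] [Field K] [Algebra F K] {a1 a2 : F} {r1 r2 : K}
    {σ1 σ2 : K ≃ₐ[F] K}

theorem swap (h : Biquad F K a1 a2 r1 r2 σ1 σ2) : Biquad F K a2 a1 r2 r1 σ2 σ1 where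
  two := h.two
  nsq1 := h.nsq2
  nsq2 := h.nsq1
  sq1 := h.sq2
  sq2 := h.sq1
  s11 := h.s22
  s12 := h.s21
  s21 := h.s12
  s22 := h.s11
  coord := fun x => by
    obtain ⟨p, q, s, t, hx⟩ := h.coord x
    exact ⟨p, s, q, t, by rw [hx]; ring⟩
  finrank := h.finrank

theorem a1_ne (h : Biquad F K a1 a2 r1 r2 σ1 σ2) : a1 ≠ 0 :=
  fun e => h.nsq1 (e ▸ IsSquare.zero)

theorem a2_ne (h : Biquad F K a1 a2 r1 r2 σ1 σ2) : a2 ≠ 0 := h.swap.a1_ne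

theorem r1_ne (h : Biquad F K a1 a2 r1 r2 σ1 σ2) : r1 ≠ 0 := fun e => by
  have := h.sq1
  rw [e, zero_pow two_ne_zero, eq_comm, map_eq_zero] at this
  exact h.a1_ne this

theorem r2_ne (h : Biquad F K a1 a2 r1 r2 σ1 σ2) : r2 ≠ 0 := h.swap.r1_ne

theorem two' (h : Biquad F K a1 a2 r1 r2 σ1 σ2) : (2 : K) ≠ 0 := by
  have := (map_ne_zero (algebraMap F K)).2 h.two
  rwa [map_ofNat] at this

theorem invol (h : Biquad F K a1 a2 r1 r2 σ1 σ2) (x : K) : σ1 (σ1 x) = x := by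
  obtain ⟨p, q, s, t, rfl⟩ := h.coord x
  simp [h.s11, h.s12]

theorem comm (h : Biquad F K a1 a2 r1 r2 σ1 σ2) (x : K) : σ1 (σ2 x) = σ2 (σ1 x) := by
  obtain ⟨p, q, s, t, rfl⟩ := h.coord x
  simp [h.s11, h.s12, h.s21, h.s22]

theorem fixed1 (h : Biquad F K a1 a2 r1 r2 σ1 σ2) {x : K} (hx : σ1 x = x) :
    ∃ p q : F, x = algebraMap F K p + algebraMap F K q * r2 := by
  obtain ⟨p, q, s, t, rfl⟩ := h.coord x
  simp only [map_add, map_mul, AlgEquiv.commutes, h.s11, h.s12] at hx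
  refine ⟨p, s, ?_⟩
  have : 2 * (algebraMap F K q * r1 + algebraMap F K t * (r1 * r2)) = 0 := by
    linear_combination -hx
  have := (mul_eq_zero.1 this).resolve_left h.two'
  linear_combination this

theorem fixed12 (h : Biquad F K a1 a2 r1 r2 σ1 σ2) {x : K} (hx : σ1 (σ2 x) = x) :
    ∃ p q : F, x = algebraMap F K p + algebraMap F K q * (r1 * r2) := by
  obtain ⟨p, q, s, t, rfl⟩ := h.coord x
  simp only [map_add, map_mul, AlgEquiv.commutes, h.s11, h.s12, h.s21, h.s22, map_neg] at hx
  refine ⟨p, t, ?_⟩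
  have : 2 * (algebraMap F K q * r1 + algebraMap F K s * r2) = 0 := by
    linear_combination -hx
  have := (mul_eq_zero.1 this).resolve_left h.two'
  linear_combination this

theorem mem_iff1 (h : Biquad F K a1 a2 r1 r2 σ1 σ2) (x : K) :
    x ∈ IntermediateField.adjoin F {r2} ↔ σ1 x = x := by
  refine ⟨mem_adjoin_fixed σ1 h.s12, fun hx => ?_⟩
  obtain ⟨p, q, rfl⟩ := h.fixed1 hx
  exact add_mem (IntermediateField.algebraMap_mem _ _) (mul_mem (IntermediateField.algebraMap_mem _ _)
    (IntermediateField.mem_adjoin_simple_self F r2))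

theorem mem_iff12 (h : Biquad F K a1 a2 r1 r2 σ1 σ2) (x : K) :
    x ∈ IntermediateField.adjoin F {r1 * r2} ↔ (σ1 * σ2) x = x := by
  refine ⟨mem_adjoin_fixed (σ1 * σ2) (by simp [h.s11, h.s12, h.s21, h.s22]), fun hx => ?_⟩
  obtain ⟨p, q, rfl⟩ := h.fixed12 hx
  exact add_mem (IntermediateField.algebraMap_mem _ _) (mul_mem (IntermediateField.algebraMap_mem _ _)
    (IntermediateField.mem_adjoin_simple_self F (r1 * r2)))

/-- Hilbert 90 for the Klein four-group. -/
theorem hilbert90 (h : Biquad F K a1 a2 r1 r2 σ1 σ2) {c1 c2 : K} (h1 : c1 * σ1 c1 = 1)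
    (h2 : c2 * σ2 c2 = 1) (h12 : c1 * σ1 c2 = c2 * σ2 c1) :
    ∃ γ : K, γ ≠ 0 ∧ σ1 γ = c1 * γ ∧ σ2 γ = c2 * γ := by
  obtain ⟨t, ht0, ht, -⟩ := _root_.hilbert90 σ1 h.invol h.r1_ne h.s11 h1
  have hs0 : σ2 t ≠ 0 := (map_ne_zero σ2).2 ht0
  have hc1 : c1 ≠ 0 := left_ne_zero_of_mul_eq_one h1
  have hsc1 : σ2 c1 ≠ 0 := (map_ne_zero σ2).2 hc1
  -- after dividing by the coboundary of `t`, the cocycle takes values `1` and `d` at `σ1` and `σ2`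
  set d := c2 * t / σ2 t with hd
  have hd1 : σ1 d = d := by
    rw [hd, map_div₀, map_mul, ht, h.comm, ht, map_mul]
    field_simp
    linear_combination h12
  have hd2 : d * σ2 d = 1 := by
    rw [hd, map_div₀, map_mul, h.swap.invol]
    field_simp
    linear_combination h2
  obtain ⟨t', ht0', ht', hor⟩ := _root_.hilbert90 σ2 h.swap.invol h.r2_ne h.s22 hd2
  have ht1 : σ1 t' = t' := by
    rcases hor with rfl | rfl
    · rw [map_add, map_one, h.comm, hd1]
    · exact h.s12
  refine ⟨t * t', mul_ne_zero ht0 ht0', by rw [map_mul, ht, ht1]; ring, ?_⟩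
  rw [map_mul, ht', hd]
  field_simp

/-- Realizability of a pattern means that the cocycle with the corresponding signs becomes trivial
in `H²(G, K×)`. -/
theorem realized_iff (h : Biquad F K a1 a2 r1 r2 σ1 σ2)
    (hG : ∀ τ : K ≃ₐ[F] K, τ = 1 ∨ τ = σ1 ∨ τ = σ2 ∨ τ = σ1 * σ2) (ε1 ε2 ε3 : Bool) :
    Realized F K a1 a2 r1 r2 σ1 σ2 ε1 ε2 ε3 ↔
      Dat σ1 σ2 (sgn K ε2) (sgn K ε1 * sgn K ε2 * sgn K ε3) (sgn K ε1) := by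
  have q1 := sgn_sq K ε1
  have q2 := sgn_sq K ε2
  have q3 := sgn_sq K ε3
  have hr12 : (σ1 * σ2) r1 = -r1 := by simp [h.s11, h.s21]
  unfold Realized
  simp only [sqrt_iff σ2 h.r2_ne h.s22 h.sq2 _ h.swap.mem_iff1,
    sqrt_iff σ1 h.r1_ne h.s11 h.sq1 _ h.mem_iff1,
    sqrt_iff (σ1 * σ2) h.r1_ne hr12 h.sq1 _ h.mem_iff12, AlgEquiv.mul_apply]
  generalize hs1 : sgn K ε1 = s1 at *
  generalize hs2 : sgn K ε2 = s2 at *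
  generalize hs3 : sgn K ε3 = s3 at *
  have f1 : ∀ σ : K ≃ₐ[F] K, σ s1 = s1 := fun σ => by subst hs1; cases ε1 <;> simp [sgn]
  have f2 : ∀ σ : K ≃ₐ[F] K, σ s2 = s2 := fun σ => by subst hs2; cases ε2 <;> simp [sgn]
  have f3 : ∀ σ : K ≃ₐ[F] K, σ s3 = s3 := fun σ => by subst hs3; cases ε3 <;> simp [sgn]
  constructor
  · rintro ⟨γ, h0, -, ⟨y2, hy2, e2⟩, ⟨y1, hy1, e1⟩, ⟨y3, hy3, e3⟩⟩
    have g1 : σ1 γ ≠ 0 := (map_ne_zero σ1).2 h0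
    have g2 : σ2 γ ≠ 0 := (map_ne_zero σ2).2 h0
    have g3 : σ1 (σ2 γ) ≠ 0 := (map_ne_zero σ1).2 g2
    have y10 : y1 ≠ 0 := fun e => mul_ne_zero h0 g1 (by rw [e1, e]; ring)
    have y20 : y2 ≠ 0 := fun e => mul_ne_zero h0 g2 (by rw [e2, e]; ring)
    have y2s : σ1 y2 ≠ 0 := (map_ne_zero σ1).2 y20
    have e2' : σ1 γ * σ1 (σ2 γ) = σ1 y2 ^ 2 := by rw [← map_mul, e2, map_pow]
    -- `y3` agrees up to sign with the cochain product at `σ1 σ2`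
    have hA : (y1 * σ1 y2) ^ 2 = (y3 * σ1 γ) ^ 2 := by
      rw [mul_pow, mul_pow, ← e1, ← e2', ← e3]; ring
    have hA' : σ1 (σ2 (y1 * σ1 y2 / σ1 γ)) = s3 * (y1 * σ1 y2 / σ1 γ) := by
      rcases sq_eq_sq_iff_eq_or_eq_neg.1 hA with e | e
      · rw [e, mul_div_assoc, div_self g1, mul_one, hy3]
      · rw [e, neg_div, mul_div_assoc, div_self g1, mul_one, map_neg, map_neg, hy3]; ring
    -- the same relation after applying `σ1`
    have hB := congrArg σ1 hA'
    have i1 := h.invol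
    simp only [i1, map_div₀, map_mul, f3, hy1, h.comm, f2] at hB
    rw [← h.comm y2, hy2, map_mul, f1] at hB
    refine ⟨y1 / γ, y2 / γ, ?_, ?_, ?_⟩
    · rw [map_div₀, hy1, div_mul_div_comm, e1]; field_simp
    · rw [map_div₀, hy2, div_mul_div_comm, e2]; field_simp
    · rw [map_div₀, map_div₀, div_mul_div_comm, div_mul_div_comm]
      field_simp at hB ⊢
      rw [← h.comm, div_eq_iff g3] at hB
      apply mul_right_cancel₀ (mul_ne_zero y2s h0)
      have hB' : σ2 y1 * s1 * σ1 y2 * γ = s2 * s3 * y1 * y2 * σ1 (σ2 γ) := by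
        linear_combination hB - σ2 y1 * s1 * σ1 y2 * γ * q2
      linear_combination (σ1 y2) ^ 2 * y1 * e2 - y1 * y2 ^ 2 * e2' - s2 * s3 * y2 * σ1 γ * hB'
        - y1 * y2 ^ 2 * σ1 (σ2 γ) * σ1 γ * (s3 ^ 2 * q2 + q3)
  · rintro ⟨w1, w2, e1, e2, e3⟩
    have s10 : s1 ≠ 0 := left_ne_zero_of_mul_eq_one q1
    have s20 : s2 ≠ 0 := left_ne_zero_of_mul_eq_one q2
    obtain ⟨γ, h0, g1, g2⟩ := h.hilbert90 (c1 := w1 ^ 2) (c2 := w2 ^ 2)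
      (by rw [map_pow, ← mul_pow, e1, pow_two, q2]) (by rw [map_pow, ← mul_pow, e2, pow_two, q1])
      (by rw [map_pow, map_pow, ← mul_pow, ← mul_pow, e3, mul_pow]
          linear_combination (w2 * σ2 w1) ^ 2 * (s2 ^ 2 * s3 ^ 2 * q1 + s3 ^ 2 * q2 + q3))
    refine ⟨γ, h0, ?_, ⟨γ * w2, ?_, ?_⟩, ⟨γ * w1, ?_, ?_⟩, ⟨γ * (w1 * σ1 w2), ?_, ?_⟩⟩
    · intro τ
      rcases hG τ with rfl | rfl | rfl | rfl
      · exact ⟨1, by simp [h0]⟩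
      · exact ⟨w1, by rw [g1]; field_simp⟩
      · exact ⟨w2, by rw [g2]; field_simp⟩
      · exact ⟨w1 * σ1 w2, by
          rw [AlgEquiv.mul_apply, g2, map_mul, g1, map_pow]; field_simp⟩
    · rw [map_mul, g2]; linear_combination γ * w2 * e2
    · rw [g2]; ring
    · rw [map_mul, g1]; linear_combination γ * w1 * e1
    · rw [g1]; ring
    · have e3' := congrArg σ1 e3
      simp only [map_mul, h.invol, f1, f2, f3] at e3'
      simp only [map_mul, g2, map_pow, g1]
      have e4 : σ1 (σ2 (σ1 w2)) = σ2 w2 := by rw [h.comm, h.invol]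
      rw [e4]
      have k : σ1 w2 * σ1 (σ2 w1) = s1 * s2 * s3 * (σ1 w1 * w2) := by
        rw [e3']
        linear_combination -(σ1 w2 * σ1 (σ2 w1)) * (s2 ^ 2 * s3 ^ 2 * q1 + s3 ^ 2 * q2 + q3)
      have k2 : w1 * σ1 w1 * (w2 * σ2 w2) = s2 * s1 := by rw [e1, e2]
      linear_combination γ * w1 * σ1 w2 * (w1 * σ2 w2 * k + s1 * s2 * s3 * k2
        + s3 * (s2 ^ 2 * q1 + q2))
    · rw [g2, map_mul, g1, map_pow]; ring

end Biquad

/-! ### Trivialized cocycles and splitting -/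

namespace Dat

variable {F K : Type} [Field F] [Field K] [Algebra F K] {σ1 σ2 : K ≃ₐ[F] K}

theorem scale {α κ β : K} (c1 c2 μ : K) (hμ : c1 * σ1 c2 = μ * (c2 * σ2 c1))
    (h : Dat σ1 σ2 α κ β) :
    Dat σ1 σ2 (α * (c1 * σ1 c1)) (κ * μ) (β * (c2 * σ2 c2)) := by
  obtain ⟨u1, u2, h1, h2, h3⟩ := h
  refine ⟨u1 * c1, u2 * c2, ?_, ?_, ?_⟩
  · rw [map_mul, ← h1]; ring
  · rw [map_mul, ← h2]; ring
  · rw [map_mul, map_mul]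
    linear_combination c1 * σ1 c2 * h3 + κ * u2 * σ2 u1 * hμ

theorem swap {α κ β : K} (hκ : κ * κ = 1) (h : Dat σ1 σ2 α κ β) : Dat σ2 σ1 β κ α := by
  obtain ⟨u1, u2, h1, h2, h3⟩ := h
  exact ⟨u2, u1, h2, h1, by rw [h3]; linear_combination -(u2 * σ2 u1) * hκ⟩

theorem swap_iff {α κ β : K} (hκ : κ * κ = 1) : Dat σ1 σ2 α κ β ↔ Dat σ2 σ1 β κ α :=
  ⟨swap hκ, swap hκ⟩

end Dat

namespace Biquad

variable {F K : Type} [Field F] [Field K] [Algebra F K] {a1 a2 : F} {r1 r2 : K}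
    {σ1 σ2 : K ≃ₐ[F] K}

/-- Multiplying `u1, u2` by `c1, c2` changes `(α, κ, β)` accordingly. -/
theorem dat_scale (c1 c2 μ : K) (hc1 : c1 ≠ 0) (hc2 : c2 ≠ 0)
    (hμ : c1 * σ1 c2 = μ * (c2 * σ2 c1)) {α κ β α' κ' β' : K} (hα : α' = α * (c1 * σ1 c1))
    (hκ : κ' = κ * μ) (hβ : β' = β * (c2 * σ2 c2)) :
    Dat σ1 σ2 α κ β ↔ Dat σ1 σ2 α' κ' β' := by
  subst hα hκ hβ
  have d1 : σ1 c1 ≠ 0 := (map_ne_zero σ1).2 hc1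
  have d2 : σ2 c2 ≠ 0 := (map_ne_zero σ2).2 hc2
  have d3 : σ1 c2 ≠ 0 := (map_ne_zero σ1).2 hc2
  have d4 : σ2 c1 ≠ 0 := (map_ne_zero σ2).2 hc1
  have hμ0 : μ ≠ 0 := fun e => mul_ne_zero hc1 d3 (by rw [hμ, e, zero_mul])
  refine ⟨Dat.scale c1 c2 μ hμ, fun H => ?_⟩
  have := H.scale c1⁻¹ c2⁻¹ μ⁻¹ (by
    rw [map_inv₀, map_inv₀, ← mul_inv, ← mul_inv, ← mul_inv, hμ])
  convert this using 1
  · rw [map_inv₀]; field_simp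
  · field_simp
  · rw [map_inv₀]; field_simp

/-- When `α = 1`, Hilbert 90 for `σ1` allows `u1 = 1`. -/
theorem dat_one (h : Biquad F K a1 a2 r1 r2 σ1 σ2) {κ β : K} :
    Dat σ1 σ2 1 κ β ↔ ∃ w, σ1 w = κ * w ∧ w * σ2 w = β := by
  constructor
  · rintro ⟨u1, u2, h1, h2, h3⟩
    obtain ⟨t, ht0, ht, -⟩ := _root_.hilbert90 σ1 h.invol h.r1_ne h.s11 (c := σ1 u1)
      (by rw [h.invol, mul_comm, h1])
    have hs0 : σ2 t ≠ 0 := (map_ne_zero σ2).2 ht0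
    have h4 : σ2 u1 * σ2 (σ1 u1) = 1 := by rw [← map_mul, h1, map_one]
    refine ⟨u2 * σ2 t / t, ?_, ?_⟩
    · rw [map_div₀, map_mul, h.comm, ht, map_mul]
      have hu : σ1 u1 ≠ 0 := right_ne_zero_of_mul_eq_one h1
      field_simp
      linear_combination (σ2 (σ1 u1) * σ1 u1) * h3 - σ1 u2 * σ2 (σ1 u1) * h1
        + κ * u2 * σ1 u1 * h4
    · rw [map_div₀, map_mul, h.swap.invol, ← h2]
      field_simp
  · rintro ⟨w, hw, hβ⟩
    exact ⟨1, w, by simp, hβ, by simp [hw]⟩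

/-- The biquaternion algebra `(a1,α) ⊗ (a2,β)` splits exactly when it acts on `K`, with the
maximal subfield `K` acting by multiplication; the other generators are then semilinear. -/
theorem split2_iff_dat (h : Biquad F K a1 a2 r1 r2 σ1 σ2) {α β : F} (hα : α ≠ 0) (hβ : β ≠ 0) :
    split2 F a1 α a2 β ↔ Dat σ1 σ2 (algebraMap F K α) 1 (algebraMap F K β) := by
  obtain ⟨e⟩ := nonempty_end_equiv h.finrank
  rw [split2_iff (B := Module.End F K) e h.two h.a1_ne hα h.a2_ne hβ]
  constructor
  · rintro ⟨i, j, k, l, H⟩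
    have hii : ∀ v, i (i v) = a1 • v := fun v => LinearMap.congr_fun H.p.ii v
    have hjj : ∀ v, j (j v) = α • v := fun v => LinearMap.congr_fun H.p.jj v
    have hij : ∀ v, j (i v) = -(i (j v)) := fun v => LinearMap.congr_fun H.p.swap.ij v
    have hkk : ∀ v, k (k v) = a2 • v := fun v => LinearMap.congr_fun H.q.ii v
    have hll : ∀ v, l (l v) = β • v := fun v => LinearMap.congr_fun H.q.jj v
    have hkl : ∀ v, l (k v) = -(k (l v)) := fun v => LinearMap.congr_fun H.q.swap.ij v
    have hik : ∀ v, k (i v) = i (k v) := fun v => (LinearMap.congr_fun H.ik v).symm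
    have hil : ∀ v, l (i v) = i (l v) := fun v => (LinearMap.congr_fun H.il v).symm
    have hjk : ∀ v, j (k v) = k (j v) := fun v => LinearMap.congr_fun H.jk v
    have hjl : ∀ v, j (l v) = l (j v) := fun v => LinearMap.congr_fun H.jl v
    have hco : ∀ x : K, ∃ p q s t : F, x = p • 1 + q • r1 + s • r2 + t • (r1 * r2) := fun x => by
      obtain ⟨p, q, s, t, hx⟩ := h.coord x
      exact ⟨p, q, s, t, by rw [hx]; simp [Algebra.smul_def]⟩
    let b : Module.Basis (Fin 4) F K := basisOfTopLeSpanOfCardEqFinrank ![1, r1, r2, r1 * r2]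
      (by
        intro x _
        obtain ⟨p, q, s, t, rfl⟩ := hco x
        refine add_mem (add_mem (add_mem ?_ ?_) ?_) ?_ <;>
          refine Submodule.smul_mem _ _ (Submodule.subset_span ?_)
        exacts [⟨0, rfl⟩, ⟨1, rfl⟩, ⟨2, rfl⟩, ⟨3, rfl⟩]) (by simp [h.finrank])
    have hb : ⇑b = ![1, r1, r2, r1 * r2] := coe_basisOfTopLeSpanOfCardEqFinrank _ _ _
    -- `L` is the orbit map `x ↦ x • v` at `v = 1` for the action of `K` through `i` and `k`
    let L : K →ₗ[F] K := b.constr F ![1, i 1, k 1, i (k 1)]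
    have L0 : L 1 = 1 := by
      have := b.constr_basis F ![1, i 1, k 1, i (k 1)] 0
      rwa [hb] at this
    have L1 : L r1 = i 1 := by
      have := b.constr_basis F ![1, i 1, k 1, i (k 1)] 1
      rwa [hb] at this
    have L2 : L r2 = k 1 := by
      have := b.constr_basis F ![1, i 1, k 1, i (k 1)] 2
      rwa [hb] at this
    have L3 : L (r1 * r2) = i (k 1) := by
      have := b.constr_basis F ![1, i 1, k 1, i (k 1)] 3
      rwa [hb] at this
    have Li : ∀ x, L (r1 * x) = i (L x) := fun x => by
      obtain ⟨p, q, s, t, rfl⟩ := hco x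
      have : r1 * (p • 1 + q • r1 + s • r2 + t • (r1 * r2)) =
          p • r1 + (q * a1) • 1 + s • (r1 * r2) + (t * a1) • r2 := by
        simp only [Algebra.smul_def, map_mul, ← h.sq1]; ring
      rw [this]
      simp only [map_add, map_smul, L0, L1, L2, L3, hii, smul_smul]
    have Lk : ∀ x, L (r2 * x) = k (L x) := fun x => by
      obtain ⟨p, q, s, t, rfl⟩ := hco x
      have : r2 * (p • 1 + q • r1 + s • r2 + t • (r1 * r2)) =
          p • r2 + q • (r1 * r2) + (s * a2) • 1 + (t * a2) • r1 := by
        simp only [Algebra.smul_def, map_mul, ← h.sq2]; ring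
      rw [this]
      simp only [map_add, map_smul, L0, L1, L2, L3, hik, hkk, smul_smul]
    have Lmul : ∀ (p q s t : F) (x : K), L ((p • 1 + q • r1 + s • r2 + t • (r1 * r2)) * x) =
        p • L x + q • i (L x) + s • k (L x) + t • i (k (L x)) := fun p q s t x => by
      simp only [add_mul, smul_mul_assoc, one_mul, map_add, map_smul, mul_assoc, Li, Lk]
    have Linj : Function.Injective L := by
      rw [injective_iff_map_eq_zero]
      intro x hx
      by_contra hx0
      obtain ⟨p, q, s, t, hy⟩ := hco x⁻¹
      have := Lmul p q s t x
      rw [← hy, inv_mul_cancel₀ hx0, L0, hx] at this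
      simp at this
    have : Module.Finite F K := Module.finite_of_finrank_pos (by rw [h.finrank]; norm_num)
    have Lsurj : Function.Surjective L := LinearMap.injective_iff_surjective.1 Linj
    obtain ⟨u1, hu1⟩ := Lsurj (j 1)
    obtain ⟨u2, hu2⟩ := Lsurj (l 1)
    have Jsemi : ∀ x, j (L x) = L (u1 * σ1 x) := fun x => by
      obtain ⟨p, q, s, t, rfl⟩ := hco x
      have : u1 * σ1 (p • 1 + q • r1 + s • r2 + t • (r1 * r2)) =
          (p • 1 + (-q) • r1 + s • r2 + (-t) • (r1 * r2)) * u1 := by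
        simp only [map_add, map_mul, map_one, h.s11, h.s12, Algebra.smul_def, map_neg,
          AlgEquiv.commutes]
        ring
      rw [this, Lmul, hu1]
      simp only [map_add, map_smul, L0, L1, L2, L3, hij, hjk, smul_neg, neg_smul]
    have Lsemi : ∀ x, l (L x) = L (u2 * σ2 x) := fun x => by
      obtain ⟨p, q, s, t, rfl⟩ := hco x
      have : u2 * σ2 (p • 1 + q • r1 + s • r2 + t • (r1 * r2)) =
          (p • 1 + q • r1 + (-s) • r2 + (-t) • (r1 * r2)) * u2 := by
        simp only [map_add, map_mul, map_one, h.s21, h.s22, Algebra.smul_def, map_neg,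
          AlgEquiv.commutes]
        ring
      rw [this, Lmul, hu2]
      simp only [map_add, map_smul, L0, L1, L2, L3, hil, hkl, smul_neg, neg_smul, map_neg]
    refine ⟨u1, u2, Linj ?_, Linj ?_, Linj ?_⟩
    · rw [← Jsemi, hu1, hjj, Algebra.algebraMap_eq_smul_one, map_smul, L0]
    · rw [← Lsemi, hu2, hll, Algebra.algebraMap_eq_smul_one, map_smul, L0]
    · rw [one_mul, ← Jsemi, ← Lsemi, hu1, hu2, hjl]
  · rintro ⟨u1, u2, h1, h2, h3⟩
    have s1 := h.sq1
    have s2 := h.sq2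
    rw [pow_two] at s1 s2
    refine ⟨LinearMap.mulLeft F r1, LinearMap.mulLeft F u1 ∘ₗ σ1.toLinearMap,
      LinearMap.mulLeft F r2, LinearMap.mulLeft F u2 ∘ₗ σ2.toLinearMap,
      ⟨?_, ?_, ?_⟩, ⟨?_, ?_, ?_⟩, ?_, ?_, ?_, ?_⟩ <;> refine LinearMap.ext fun v => ?_ <;>
      simp only [Module.End.mul_apply, LinearMap.mulLeft_apply, LinearMap.comp_apply,
        Module.algebraMap_end_apply, LinearMap.neg_apply, AlgEquiv.toLinearMap_apply,
        map_mul, Algebra.smul_def, h.s11, h.s12, h.s21, h.s22, h.invol, h.swap.invol, h.comm]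
    · rw [← s1]; ring
    · rw [← h1]; ring
    · ring
    · rw [← s2]; ring
    · rw [← h2]; ring
    · ring
    · ring
    · ring
    · ring
    · linear_combination (σ2 (σ1 v)) * h3

end Biquad

/-! ### The seven patterns -/

namespace Biquad

variable {F K : Type} [Field F] [Field K] [Algebra F K] {a1 a2 : F} {r1 r2 : K}
  {σ1 σ2 : K ≃ₐ[F] K}

/-- By `dat_one` the left side asks for `w` with `σ1 w = -w` and `w * σ2 w = 1`, that is, for
`a1⁻¹` (equivalently `a1`) to be a norm from `F(√a2)`; rescaling turns this into `a2` being a norm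
from `F(√a1)`. -/
theorem dat_norm12 (h : Biquad F K a1 a2 r1 r2 σ1 σ2) :
    Dat σ1 σ2 1 (-1) 1 ↔ split1 F a1 a2 := by
  rw [h.dat_one, split1_iff_norm h.two h.nsq1 h.a2_ne]
  have hs1 := h.sq1
  have hs2 := h.sq2
  have ha1 := h.a1_ne
  constructor
  · rintro ⟨w, hw, hw2⟩
    have hfix : σ1 (w / r1) = w / r1 := by
      rw [map_div₀, hw, h.s11, neg_one_mul, neg_div_neg_eq]
    obtain ⟨p, q, hpq⟩ := h.fixed1 hfix
    rw [div_eq_iff h.r1_ne] at hpq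
    have hF : a1 * (p ^ 2 - a2 * q ^ 2) = 1 := by
      apply (algebraMap F K).injective
      rw [hpq] at hw2
      simp only [map_mul, map_add, AlgEquiv.commutes, h.s21, h.s22] at hw2
      simp only [map_mul, map_sub, map_pow, map_one, ← hs1, ← hs2]
      linear_combination hw2
    have hq : q ≠ 0 := by
      rintro rfl
      have hp : p ≠ 0 := by
        rintro rfl
        simp at hF
      exact h.nsq1 ⟨p⁻¹, by field_simp; linear_combination hF⟩
    refine ⟨p / q, 1 / (a1 * q), ?_⟩
    field_simp
    linear_combination hF
  · rintro ⟨s, t, hst⟩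
    have ht : t ≠ 0 := by
      rintro rfl
      exact h.nsq2 ⟨s, by linear_combination -hst⟩
    have ht' : algebraMap F K t ≠ 0 := by simpa using ht
    have hr1 := h.r1_ne
    have hst' := congrArg (algebraMap F K) hst
    simp only [map_mul, map_sub, map_pow, ← hs1, ← hs2] at hst'
    refine ⟨(algebraMap F K s + r2) / (r1 * algebraMap F K t), ?_, ?_⟩
    · simp only [map_div₀, map_add, map_mul, AlgEquiv.commutes, h.s11, h.s12]
      field_simp
    · simp only [map_div₀, map_add, map_mul, AlgEquiv.commutes, h.s21, h.s22]
      field_simp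
      linear_combination hst'

/-- By `dat_one` the left side asks for `-1` to be a norm from `F(√a2)`, where `-a2` is the norm
of `√a2`. -/
theorem dat_norm22 (h : Biquad F K a1 a2 r1 r2 σ1 σ2) :
    Dat σ1 σ2 1 1 (-1) ↔ split1 F a2 a2 := by
  rw [h.dat_one, split1_iff_norm h.two h.nsq2 h.a2_ne]
  have hs2 := h.sq2
  constructor
  · rintro ⟨w, hw, hw2⟩
    obtain ⟨p, q, rfl⟩ := h.fixed1 (by rw [hw, one_mul])
    refine ⟨a2 * q, p, (algebraMap F K).injective ?_⟩
    simp only [map_mul, map_add, AlgEquiv.commutes, h.s22] at hw2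
    simp only [map_mul, map_sub, map_pow, ← hs2]
    linear_combination -r2 ^ 2 * hw2
  · rintro ⟨s, t, hst⟩
    have hr2 := h.r2_ne
    have hst' := congrArg (algebraMap F K) hst
    simp only [map_mul, map_sub, map_pow, ← hs2] at hst'
    refine ⟨(algebraMap F K s + algebraMap F K t * r2) / r2, ?_, ?_⟩
    · simp only [map_div₀, map_add, map_mul, AlgEquiv.commutes, h.s12, one_mul]
    · simp only [map_div₀, map_add, map_mul, AlgEquiv.commutes, h.s22]
      field_simp
      linear_combination -hst'

theorem dat_norm11 (h : Biquad F K a1 a2 r1 r2 σ1 σ2) :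
    Dat σ1 σ2 (-1) 1 1 ↔ split1 F a1 a1 :=
  (Dat.swap_iff (by simp)).trans h.swap.dat_norm22

theorem dat_100 (h : Biquad F K a1 a2 r1 r2 σ1 σ2) :
    Dat σ1 σ2 1 (-1) (-1) ↔ split2 F a1 a2 a2 a2 := by
  rw [h.split2_iff_dat h.a2_ne h.a2_ne, ← h.sq2]
  refine dat_scale r2 r2 (-1) h.r2_ne h.r2_ne ?_ ?_ ?_ ?_ <;>
    try simp only [h.s12, h.s22]
  all_goals ring

theorem dat_010 (h : Biquad F K a1 a2 r1 r2 σ1 σ2) :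
    Dat σ1 σ2 (-1) (-1) 1 ↔ split2 F a1 a1 a1 a2 := by
  rw [split2_swap h.two h.a1_ne h.a1_ne h.a1_ne h.a2_ne, h.split2_iff_dat h.a1_ne h.a1_ne,
    ← h.sq1]
  refine dat_scale r1 r1 (-1) h.r1_ne h.r1_ne ?_ ?_ ?_ ?_ <;>
    try simp only [h.s11, h.s21]
  all_goals ring

theorem dat_110 (h : Biquad F K a1 a2 r1 r2 σ1 σ2) :
    Dat σ1 σ2 (-1) 1 (-1) ↔ split2 F a1 a1 a2 a2 := by
  rw [h.split2_iff_dat h.a1_ne h.a2_ne, ← h.sq1, ← h.sq2]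
  refine dat_scale r1 r2 1 h.r1_ne h.r2_ne ?_ ?_ ?_ ?_ <;>
    try simp only [h.s11, h.s12, h.s21, h.s22]
  all_goals ring

theorem dat_111 (h : Biquad F K a1 a2 r1 r2 σ1 σ2) :
    Dat σ1 σ2 (-1) (-1) (-1) ↔ split3 F a1 a1 a1 a2 a2 a2 := by
  rw [split3_iff_split2 h.two h.a1_ne h.a1_ne h.a2_ne h.a2_ne h.a2_ne,
    h.split2_iff_dat (mul_ne_zero h.a1_ne h.a2_ne) h.a2_ne, map_mul, ← h.sq1, ← h.sq2]
  refine dat_scale (r1 * r2) r2 (-1) (mul_ne_zero h.r1_ne h.r2_ne) h.r2_ne ?_ ?_ ?_ ?_ <;>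
    try simp only [map_mul, h.s11, h.s12, h.s21, h.s22]
  all_goals ring

end Biquad

/-- The elements `1, √a1, √a2, √a1√a2` span `K = F(√a1, √a2)`. -/
theorem exists_coord {F K : Type} [Field F] [Field K] [Algebra F K] {a1 a2 : F} {r1 r2 : K}
    (hr1 : r1 ^ 2 = algebraMap F K a1) (hr2 : r2 ^ 2 = algebraMap F K a2)
    (hgen : IntermediateField.adjoin F {r1, r2} = ⊤) (x : K) :
    ∃ p q s t : F, x = algebraMap F K p + algebraMap F K q * r1 +
      algebraMap F K s * r2 + algebraMap F K t * (r1 * r2) := by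
  have halg : ∀ y ∈ ({r1, r2} : Set K), IsAlgebraic F y := by
    rintro y (rfl | rfl)
    · exact IsAlgebraic.of_pow two_pos (hr1 ▸ isAlgebraic_algebraMap a1)
    · exact IsAlgebraic.of_pow two_pos (hr2 ▸ isAlgebraic_algebraMap a2)
  have hx : x ∈ Algebra.adjoin F {r1, r2} := by
    rw [← IntermediateField.adjoin_toSubalgebra_of_isAlgebraic halg, hgen]
    exact IntermediateField.mem_top
  induction hx using Algebra.adjoin_induction with
  | mem y hy =>
    rcases hy with rfl | rfl
    · exact ⟨0, 1, 0, 0, by simp⟩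
    · exact ⟨0, 0, 1, 0, by simp⟩
  | algebraMap c => exact ⟨c, 0, 0, 0, by simp⟩
  | add y z _ _ hy hz =>
    obtain ⟨p, q, s, t, rfl⟩ := hy
    obtain ⟨p', q', s', t', rfl⟩ := hz
    exact ⟨p + p', q + q', s + s', t + t', by simp only [map_add]; ring⟩
  | mul y z _ _ hy hz =>
    obtain ⟨p, q, s, t, rfl⟩ := hy
    obtain ⟨p', q', s', t', rfl⟩ := hz
    refine ⟨p * p' + a1 * (q * q') + a2 * (s * s') + a1 * a2 * (t * t'),
      p * q' + q * p' + a2 * (s * t' + t * s'), p * s' + s * p' + a1 * (q * t' + t * q'),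
      p * t' + t * p' + q * s' + s * q', ?_⟩
    simp only [map_add, map_mul, ← hr1, ← hr2]
    ring

theorem finrank_eq_four {F K : Type} [Field F] [Field K] [Algebra F K] {r1 r2 : K}
    (hco : ∀ x : K, ∃ p q s t : F, x = algebraMap F K p + algebraMap F K q * r1 +
      algebraMap F K s * r2 + algebraMap F K t * (r1 * r2))
    [IsGalois F K] (hG4 : Nat.card (K ≃ₐ[F] K) = 4) : Module.finrank F K = 4 := by
  have : Module.Finite F K := by
    refine ⟨Submodule.fg_def.2 ⟨Set.range ![1, r1, r2, r1 * r2], Set.finite_range _, ?_⟩⟩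
    rw [eq_top_iff]
    intro x _
    obtain ⟨p, q, s, t, rfl⟩ := hco x
    rw [← mul_one (algebraMap F K p)]
    simp only [← Algebra.smul_def]
    refine add_mem (add_mem (add_mem ?_ ?_) ?_) ?_ <;>
      refine Submodule.smul_mem _ _ (Submodule.subset_span ?_)
    exacts [⟨0, rfl⟩, ⟨1, rfl⟩, ⟨2, rfl⟩, ⟨3, rfl⟩]
  rw [← IsGalois.card_aut_eq_finrank, hG4]

/-- with `F` of characteristic `≠ 2`, `a1, a2 ∈ F×` independent mod squares,
`K = F(√a1,√a2)` and `Gal(K/F) = {1, σ1, σ2, σ1σ2} ≅ ℤ/2ℤ × ℤ/2ℤ`, the realizability of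
each norm-residue pattern `(ε1,ε2,ε3)` is equivalent to the vanishing in `Br(F)` of the
corresponding combination of the quaternion classes `(a1,a1)`, `(a1,a2)`, `(a2,a2)`. -/
theorem stmt6
    (F K : Type) [Field F] [Field K] [Algebra F K] (hchar : (2 : F) ≠ 0)
    (a1 a2 : F) (ha1 : a1 ≠ 0) (ha2 : a2 ≠ 0)
    (hi1 : ¬ IsSquare a1) (hi2 : ¬ IsSquare a2) (hi12 : ¬ IsSquare (a1 * a2))
    (r1 r2 : K) (hr1 : r1 ^ 2 = algebraMap F K a1) (hr2 : r2 ^ 2 = algebraMap F K a2)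
    (hgen : IntermediateField.adjoin F {r1, r2} = ⊤)
    [IsGalois F K]
    (σ1 σ2 : K ≃ₐ[F] K)
    (hσ1r1 : σ1 r1 = -r1) (hσ1r2 : σ1 r2 = r2)
    (hσ2r1 : σ2 r1 = r1) (hσ2r2 : σ2 r2 = -r2)
    (hG : ∀ τ : K ≃ₐ[F] K, τ = 1 ∨ τ = σ1 ∨ τ = σ2 ∨ τ = σ1 * σ2)
    (hG4 : Nat.card (K ≃ₐ[F] K) = 4) :
    (Realized F K a1 a2 r1 r2 σ1 σ2 true false false ↔ split2 F a1 a2 a2 a2) ∧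
    (Realized F K a1 a2 r1 r2 σ1 σ2 false true false ↔ split2 F a1 a1 a1 a2) ∧
    (Realized F K a1 a2 r1 r2 σ1 σ2 false false true ↔ split1 F a1 a2) ∧
    (Realized F K a1 a2 r1 r2 σ1 σ2 true true false ↔ split2 F a1 a1 a2 a2) ∧
    (Realized F K a1 a2 r1 r2 σ1 σ2 true false true ↔ split1 F a2 a2) ∧
    (Realized F K a1 a2 r1 r2 σ1 σ2 false true true ↔ split1 F a1 a1) ∧
    (Realized F K a1 a2 r1 r2 σ1 σ2 true true true ↔ split3 F a1 a1 a1 a2 a2 a2) := by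
  have hco := exists_coord hr1 hr2 hgen
  have h : Biquad F K a1 a2 r1 r2 σ1 σ2 :=
    ⟨hchar, hi1, hi2, hr1, hr2, hσ1r1, hσ1r2, hσ2r1, hσ2r2, hco, finrank_eq_four hco hG4⟩
  simp only [h.realized_iff hG, sgn, cond_true, cond_false, mul_one, mul_neg,
    neg_neg]
  exact ⟨h.dat_100, h.dat_010, h.dat_norm12, h.dat_110, h.dat_norm22, h.dat_norm11, h.dat_111⟩
end

section
/- For every prime number p such that p ≡ 1 (mod 4), p ≡ 1 or 4 (mod 5), and p ≡ 1, 2, or 4 (mod 7), one has (−5, −p) = (−5, −5) and (7, −p) = (7, 7) in Br(ℚ). -/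
/-!
Two quaternion algebras `(a, b)` and `(a, b')` over `ℚ` are isomorphic as soon as `b' / b` is a
nonzero norm `x² - a y²` from `ℚ(√a)` (replace `j` by `(x + y i) j`). Both ratios `(-p) / (-5)`
and `(-p) / 7` are norms exactly when `p` itself is one, because `5` is the norm of `√-5` and `-7`
is the norm of `√7`. So it suffices to write `p = x² + 5 y²` and `p = x² - 7 y²` with rational
`x, y`.

By quadratic reciprocity the congruences make `-5` and `7` squares modulo `p`. Thue's pigeonhole
argument (`exists_small_norm`) then gives integers with `x² + 5 y² = k p`, `0 < k < 6`, resp.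
`x² - 7 y² = k p`, `-7 < k < 0`. Congruences modulo `5`, resp. modulo `4` and `7`, leave only
`k ∈ {1, 4, 5}`, resp. `k ∈ {-6, -3}`; each such `k` is itself a norm, and dividing the two norms
represents `p` over `ℚ`.
-/

open Quaternion

/-- Equality of quaternion Brauer classes `(a,b) = (c,d)` in `Br(ℚ)`: since both are
represented by 4-dimensional central simple algebras, the classes are equal iff the
quaternion algebras are isomorphic as `ℚ`-algebras. -/
def quatEq (a b c d : ℚ) : Prop :=
  Nonempty (ℍ[ℚ, a, b] ≃ₐ[ℚ] ℍ[ℚ, c, d])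

/-- Multiplying the second slot by a nonzero norm from `ℚ(√a)` does not change the quaternion
algebra: `i` and `(x + y i) j` satisfy the relations of `(a, b')`. -/
lemma quatEq_of_norm {a b b' x y : ℚ} (hb' : b' ≠ 0) (h : b' = b * (x ^ 2 - a * y ^ 2)) :
    quatEq a b' a b := by
  let B : QuaternionAlgebra.Basis ℍ[ℚ, a, b] a 0 b' :=
    { i := ⟨0, 1, 0, 0⟩
      j := ⟨0, 0, x, y⟩
      k := ⟨0, 0, a * y, x⟩
      i_mul_i := by ext <;> simp
      j_mul_j := by ext <;> simp [h] <;> ring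
      i_mul_j := by ext <;> simp
      j_mul_i := by ext <;> simp }
  have hN : x ^ 2 - a * y ^ 2 ≠ 0 := fun h0 => hb' (by rw [h, h0, mul_zero])
  have hinj : Function.Injective B.liftHom.toLinearMap := by
    rw [← LinearMap.ker_eq_bot, LinearMap.ker_eq_bot']
    intro w hw
    have hw' : B.lift w = 0 := hw
    simp only [QuaternionAlgebra.Basis.lift, B, QuaternionAlgebra.ext_iff] at hw'
    simp at hw'
    obtain ⟨h0, h1, h2, h3⟩ := hw'
    -- Cramer's rule for the `j`, `k` coordinates; the determinant is the norm.
    have e2 : w.imJ * (x ^ 2 - a * y ^ 2) = 0 := by linear_combination x * h2 - a * y * h3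
    have e3 : w.imK * (x ^ 2 - a * y ^ 2) = 0 := by linear_combination x * h3 - y * h2
    ext
    · simpa using h0
    · simpa using h1
    · simpa [hN] using e2
    · simpa [hN] using e3
  have hfr : Module.finrank ℚ ℍ[ℚ, a, b'] = Module.finrank ℚ ℍ[ℚ, a, b] := by
    rw [QuaternionAlgebra.finrank_eq_four, QuaternionAlgebra.finrank_eq_four]
  exact ⟨AlgEquiv.ofBijective B.liftHom
    ⟨hinj, (LinearMap.injective_iff_surjective_of_finrank_eq_finrank hfr).1 hinj⟩⟩

/-- Thue's lemma: if `d` is a square modulo `p`, some nonzero vector of the lattice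
`x ≡ r y (mod p)`, `r² ≡ d`, has both coordinates smaller than `√p`. -/
lemma exists_small_norm {p : ℕ} (hp : p.Prime) {d : ℤ} (hd : IsSquare (d : ZMod p)) :
    ∃ x y k : ℤ, (x ≠ 0 ∨ y ≠ 0) ∧ x ^ 2 < p ∧ y ^ 2 < p ∧ x ^ 2 - d * y ^ 2 = k * p := by
  have := Fact.mk hp
  obtain ⟨r, hr⟩ := hd
  obtain ⟨s, hs⟩ : ∃ s, s = Nat.sqrt p := ⟨_, rfl⟩
  have hs1 : s * s < p := by
    refine lt_of_le_of_ne (hs ▸ Nat.sqrt_le p) fun h => ?_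
    exact hp.prime.irreducible.not_isSquare ⟨s, h.symm⟩
  have hs2 : p < (s + 1) * (s + 1) := hs ▸ Nat.lt_succ_sqrt p
  let f : Fin (s + 1) × Fin (s + 1) → ZMod p := fun u => (u.1 : ℕ) - r * (u.2 : ℕ)
  obtain ⟨u, v, huv, hf⟩ := Fintype.exists_ne_map_eq_of_card_lt f (by simpa [ZMod.card] using hs2)
  have small : ∀ m n : Fin (s + 1), (((m : ℕ) : ℤ) - ((n : ℕ) : ℤ)) ^ 2 < p := by
    intro m n
    have hm := m.2
    have hn := n.2
    have : (((m : ℕ) : ℤ) - ((n : ℕ) : ℤ)) ^ 2 ≤ (s : ℤ) ^ 2 := by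
      apply sq_le_sq' <;> omega
    have : (s : ℤ) * s < p := by exact_mod_cast hs1
    nlinarith
  have hdvd : (p : ℤ) ∣ (((u.1 : ℕ) : ℤ) - ((v.1 : ℕ) : ℤ)) ^ 2
      - d * (((u.2 : ℕ) : ℤ) - ((v.2 : ℕ) : ℤ)) ^ 2 := by
    rw [← ZMod.intCast_zmod_eq_zero_iff_dvd]
    push_cast
    have e : ((u.1 : ℕ) : ZMod p) - ((v.1 : ℕ) : ZMod p)
        = r * (((u.2 : ℕ) : ZMod p) - ((v.2 : ℕ) : ZMod p)) := by
      simp only [f] at hf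
      linear_combination hf
    rw [e, hr]
    ring
  obtain ⟨k, hk⟩ := hdvd
  refine ⟨_, _, k, ?_, small u.1 v.1, small u.2 v.2, by rw [hk, mul_comm]⟩
  by_contra! hc
  apply huv
  ext
  · omega
  · omega

lemma exists_rat_sq_add_five_mul_sq {p : ℕ} (hp : p.Prime) (h4 : p % 4 = 1)
    (h5 : p % 5 = 1 ∨ p % 5 = 4) : ∃ x y : ℚ, (p : ℚ) = x ^ 2 + 5 * y ^ 2 := by
  have := Fact.mk hp
  have : Fact (Nat.Prime 5) := ⟨by norm_num⟩
  have hsq5 : IsSquare ((5 : ℕ) : ZMod p) := by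
    rw [ZMod.exists_sq_eq_prime_iff_of_mod_four_eq_one h4 (by norm_num),
      ← ZMod.natCast_mod p 5]
    rcases h5 with h | h <;> rw [h]
    · exact ⟨1, rfl⟩
    · exact ⟨2, rfl⟩
  have hneg : IsSquare (-1 : ZMod p) := ZMod.exists_sq_eq_neg_one_iff.2 (by omega)
  have hd : IsSquare (((-5 : ℤ)) : ZMod p) := by
    simpa using hneg.mul hsq5
  obtain ⟨x, y, k, hne, hx, hy, hk⟩ := exists_small_norm hp hd
  have hp0 : (0 : ℤ) < p := by exact_mod_cast hp.pos
  have hpos : 0 < x ^ 2 + 5 * y ^ 2 := by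
    rcases hne with h | h <;> positivity
  have hk0 : 0 < k := by
    by_contra! h
    nlinarith
  have hk6 : k < 6 := by
    by_contra! h
    nlinarith
  have hmod : x ^ 2 % 5 = k * p % 5 := by rw [← hk]; omega
  have hxr : x ^ 2 % 5 = 0 ∨ x ^ 2 % 5 = 1 ∨ x ^ 2 % 5 = 4 := by
    have : x % 5 = 0 ∨ x % 5 = 1 ∨ x % 5 = 2 ∨ x % 5 = 3 ∨ x % 5 = 4 := by omega
    rcases this with h | h | h | h | h <;> simp [pow_two, Int.mul_emod, h]
  have hkq : (x : ℚ) ^ 2 + 5 * y ^ 2 = k * p := by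
    have : x ^ 2 + 5 * y ^ 2 = k * p := by linarith
    exact_mod_cast this
  have hcases : k = 1 ∨ k = 2 ∨ k = 3 ∨ k = 4 ∨ k = 5 := by omega
  rcases hcases with rfl | rfl | rfl | rfl | rfl
  · exact ⟨x, y, by push_cast at hkq; linarith⟩
  · omega
  · omega
  · exact ⟨x / 2, y / 2, by push_cast at hkq; linarith⟩
  · -- Division by `√-5`, of norm `5`.
    exact ⟨y, x / 5, by push_cast at hkq; linarith⟩

lemma exists_rat_sq_sub_seven_mul_sq {p : ℕ} (hp : p.Prime) (h4 : p % 4 = 1)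
    (h7 : p % 7 = 1 ∨ p % 7 = 2 ∨ p % 7 = 4) : ∃ x y : ℚ, (p : ℚ) = x ^ 2 - 7 * y ^ 2 := by
  have := Fact.mk hp
  have : Fact (Nat.Prime 7) := ⟨by norm_num⟩
  have hsq7 : IsSquare ((7 : ℕ) : ZMod p) := by
    rw [ZMod.exists_sq_eq_prime_iff_of_mod_four_eq_one h4 (by norm_num),
      ← ZMod.natCast_mod p 7]
    rcases h7 with h | h | h <;> rw [h]
    · exact ⟨1, rfl⟩
    · exact ⟨3, rfl⟩
    · exact ⟨2, rfl⟩
  have hd : IsSquare (((7 : ℤ)) : ZMod p) := by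
    exact_mod_cast hsq7
  obtain ⟨x, y, k, hne, hx, hy, hk⟩ := exists_small_norm hp hd
  have hp0 : (0 : ℤ) < p := by exact_mod_cast hp.pos
  have hk1 : k < 1 := by
    by_contra! h
    nlinarith [sq_nonneg y]
  have hk7 : -7 < k := by
    by_contra! h
    nlinarith [sq_nonneg x]
  have hmod : x ^ 2 % 7 = k * p % 7 := by rw [← hk]; omega
  have hxr : x ^ 2 % 7 = 0 ∨ x ^ 2 % 7 = 1 ∨ x ^ 2 % 7 = 2 ∨ x ^ 2 % 7 = 4 := by
    have : x % 7 = 0 ∨ x % 7 = 1 ∨ x % 7 = 2 ∨ x % 7 = 3 ∨ x % 7 = 4 ∨ x % 7 = 5 ∨ x % 7 = 6 := by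
      omega
    rcases this with h | h | h | h | h | h | h <;> simp [pow_two, Int.mul_emod, h]
  have sq4 : ∀ z : ℤ, z ^ 2 % 4 = 0 ∨ z ^ 2 % 4 = 1 := by
    intro z
    have : z % 4 = 0 ∨ z % 4 = 1 ∨ z % 4 = 2 ∨ z % 4 = 3 := by omega
    rcases this with h | h | h | h <;> simp [pow_two, Int.mul_emod, h]
  have hx4 := sq4 x
  have hy4 := sq4 y
  have hkq : (x : ℚ) ^ 2 - 7 * y ^ 2 = k * p := by exact_mod_cast hk
  have hcases : k = 0 ∨ k = -1 ∨ k = -2 ∨ k = -3 ∨ k = -4 ∨ k = -5 ∨ k = -6 := by omega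
  rcases hcases with rfl | rfl | rfl | rfl | rfl | rfl | rfl
  · -- `x² = 7 y²` has no nonzero solution, since `7` is not a square in `ℚ`.
    exfalso
    have hxy : x ^ 2 = 7 * y ^ 2 := by linarith
    have hy0 : y ≠ 0 := by
      rintro rfl
      simp at hxy
      simp [hxy] at hne
    have hy0q : (y : ℚ) ≠ 0 := by exact_mod_cast hy0
    have hxyq : (x : ℚ) ^ 2 = 7 * y ^ 2 := by exact_mod_cast hxy
    have : IsSquare (((7 : ℕ)) : ℚ) := ⟨x / y, by field_simp; push_cast; linarith⟩
    rw [Rat.isSquare_natCast_iff] at this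
    exact (by norm_num : Nat.Prime 7).prime.irreducible.not_isSquare this
  · omega
  · omega
  · -- Division by `2 + √7`, of norm `-3`.
    exact ⟨(2 * x - 7 * y) / 3, (2 * y - x) / 3, by push_cast at hkq; linarith⟩
  · omega
  · omega
  · -- Division by `1 + √7`, of norm `-6`.
    exact ⟨(x - 7 * y) / 6, (y - x) / 6, by push_cast at hkq; linarith⟩

/-- For every prime `p` with `p ≡ 1 (mod 4)`, `p ≡ 1, 4 (mod 5)` and
`p ≡ 1, 2, 4 (mod 7)` one has `(−5,−p) = (−5,−5)` and `(7,−p) = (7,7)` in `Br(ℚ)`. -/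
theorem stmt9 (p : ℕ) (hp : p.Prime) (h4 : p % 4 = 1)
    (h5 : p % 5 = 1 ∨ p % 5 = 4)
    (h7 : p % 7 = 1 ∨ p % 7 = 2 ∨ p % 7 = 4) :
    quatEq (-5) (-(p : ℚ)) (-5) (-5) ∧ quatEq 7 (-(p : ℚ)) 7 7 := by
  have hp0 : -(p : ℚ) ≠ 0 := neg_ne_zero.2 (by exact_mod_cast hp.ne_zero)
  obtain ⟨x, y, hxy⟩ := exists_rat_sq_add_five_mul_sq hp h4 h5
  obtain ⟨u, v, huv⟩ := exists_rat_sq_sub_seven_mul_sq hp h4 h7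
  -- The norms used are those of `(x + y √-5) / √-5` and `(u + v √7) / √7`, up to conjugation.
  exact ⟨quatEq_of_norm (x := y) (y := x / 5) hp0 (by rw [hxy]; ring),
    quatEq_of_norm (x := v) (y := u / 7) hp0 (by rw [huv]; ring)⟩
end

section
/- (33, 3pq) = (33, 33) in Br(ℚ). -/
/-!
The idea: `(33, b N) = (33, b)` whenever `N = x² - 33 y²` is a nonzero norm from `ℚ(√33)`
(`quatEq_of_norm`; replace `j` by `(x + y i) j`). Since `3pq = 33 · (pq / 11)`, it is enough that
`pq / 11 = (-p) · q · (-11) / 11²` is a norm. Here `-11` is the norm of `11 + 2√33`.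

For `-p` and `q`: the congruences modulo `3` and `11` and quadratic reciprocity make `33` a square
modulo `p` and `q`. A pigeonhole argument of Thue type gives, for `ℓ ∈ {p, q}`, a small nonzero
solution of `x² ≡ 33 y² (mod ℓ)`, hence `x² - 33 y² = k ℓ` with `-5 ≤ k ≤ 6`. Looking modulo `4`
and `5` leaves `k ∈ {±1, ±3, ±4}`. As `3` and `4` are norms, one of `ℓ`, `-ℓ` is a norm, and the
residue of `ℓ` modulo `3` decides which one (`norm_or_neg_norm`).
-/

open Quaternion

/-- `r` is the norm of an element `x + y√33` of `ℚ(√33)`. -/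
def IsNorm33 (r : ℚ) : Prop := ∃ x y : ℚ, x ^ 2 - 33 * y ^ 2 = r

lemma IsNorm33.congr {r s : ℚ} (hr : IsNorm33 r) (h : r = s) : IsNorm33 s := h ▸ hr

lemma IsNorm33.mul {r s : ℚ} (hr : IsNorm33 r) (hs : IsNorm33 s) : IsNorm33 (r * s) := by
  obtain ⟨a, b, rfl⟩ := hr
  obtain ⟨c, d, rfl⟩ := hs
  exact ⟨a * c + 33 * b * d, a * d + b * c, by ring⟩

/-- The isomorphism fixes `i` and sends the generator `j` of `(33, bN)` to `(x + y i) j`. -/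
lemma quatEq_of_norm_s10 (b N : ℚ) (hN : N ≠ 0) (h : IsNorm33 N) :
    quatEq 33 (b * N) 33 b := by
  obtain ⟨x, y, rfl⟩ := h
  refine ⟨AlgEquiv.ofLinearEquiv
    { toFun := fun z => ⟨z.re, z.imI, x * z.imJ + 33 * y * z.imK, y * z.imJ + x * z.imK⟩
      invFun := fun z => ⟨z.re, z.imI, (x * z.imJ - 33 * y * z.imK) / (x ^ 2 - 33 * y ^ 2),
        (x * z.imK - y * z.imJ) / (x ^ 2 - 33 * y ^ 2)⟩
      map_add' := ?_
      map_smul' := ?_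
      left_inv := ?_
      right_inv := ?_ } ?_ ?_⟩
  · intro u v
    ext <;> simp <;> ring
  · intro c v
    ext <;> simp <;> ring
  · intro v
    ext
    · rfl
    · rfl
    all_goals
      refine (div_eq_iff hN).mpr ?_
      dsimp only
      ring
  · intro v
    ext
    · rfl
    · rfl
    all_goals
      simp only [← mul_div_assoc, ← add_div]
      refine (div_eq_iff hN).mpr ?_
      ring
  · ext <;> simp
  · intro u v
    ext <;> simp <;> ring

/-- Thue-type pigeonhole with the box `|x| ≤ √(6ℓ)`, `|y| ≤ √(ℓ/6)`, which makes
`x² - 33 y²` lie between `-5.5 ℓ` and `6 ℓ`. -/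
lemma exists_small (l : ℕ) (hl : 0 < l) (s : ℤ) :
    ∃ x y : ℤ, (x ≠ 0 ∨ y ≠ 0) ∧ x ^ 2 ≤ 6 * l ∧ 6 * y ^ 2 ≤ l ∧ (l : ℤ) ∣ x - s * y := by
  have : NeZero l := ⟨hl.ne'⟩
  set X := Nat.sqrt (6 * l) with hX
  set Y := Nat.sqrt (l / 6) with hY
  have hX1 : X ^ 2 ≤ 6 * l := Nat.sqrt_le' _
  have hX2 : 6 * l < (X + 1) ^ 2 := Nat.lt_succ_sqrt' _
  have hY1 : Y ^ 2 ≤ l / 6 := Nat.sqrt_le' _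
  have hY2 : l / 6 < (Y + 1) ^ 2 := Nat.lt_succ_sqrt' _
  have hY1' : 6 * Y ^ 2 ≤ l := by omega
  have hY2' : l < 6 * (Y + 1) ^ 2 := by omega
  have hbig : l < (X + 1) * (Y + 1) := by
    have h1 : 6 * l * l < (X + 1) ^ 2 * (6 * (Y + 1) ^ 2) := by
      calc 6 * l * l ≤ (X + 1) ^ 2 * l := by gcongr
        _ < _ := by gcongr
    refine lt_of_pow_lt_pow_left₀ 2 (Nat.zero_le _) ?_
    nlinarith
  obtain ⟨a, ha, b, hb, hab, hf⟩ := Finset.exists_ne_map_eq_of_card_lt_of_maps_to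
    (s := Finset.range (X + 1) ×ˢ Finset.range (Y + 1)) (t := (Finset.univ : Finset (ZMod l)))
    (f := fun u => ((u.1 : ZMod l) - (s : ZMod l) * (u.2 : ZMod l)))
    (by simpa [ZMod.card] using hbig) (by intro u _; simp)
  simp only [Finset.mem_product, Finset.mem_range] at ha hb
  refine ⟨(a.1 : ℤ) - b.1, (a.2 : ℤ) - b.2, ?_, ?_, ?_, ?_⟩
  · by_contra! hc
    exact hab (Prod.ext (by omega) (by omega))
  · have : ((a.1 : ℤ) - b.1) ^ 2 ≤ (X : ℤ) ^ 2 := sq_le_sq' (by omega) (by omega)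
    have h2 : (X : ℤ) ^ 2 ≤ 6 * l := by exact_mod_cast hX1
    linarith
  · have : ((a.2 : ℤ) - b.2) ^ 2 ≤ (Y : ℤ) ^ 2 := sq_le_sq' (by omega) (by omega)
    have h2 : 6 * (Y : ℤ) ^ 2 ≤ l := by exact_mod_cast hY1'
    linarith
  · rw [← ZMod.intCast_zmod_eq_zero_iff_dvd]
    push_cast
    linear_combination hf

lemma sq_mod_three (n : ℤ) : n ^ 2 % 3 = 0 ∨ n ^ 2 % 3 = 1 := by
  have h : n % 3 = 0 ∨ n % 3 = 1 ∨ n % 3 = 2 := by omega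
  rcases h with h | h | h <;> simp [pow_two, Int.mul_emod, h]

lemma sq_mod_four (n : ℤ) : n ^ 2 % 4 = 0 ∨ n ^ 2 % 4 = 1 := by
  have h : n % 4 = 0 ∨ n % 4 = 1 ∨ n % 4 = 2 ∨ n % 4 = 3 := by omega
  rcases h with h | h | h | h <;> simp [pow_two, Int.mul_emod, h]

/-- `33` is not a square modulo `5`, so `x² - 33 y²` is divisible by `5` only if it is by `25`. -/
lemma five_case (x y : ℤ) (h : 5 ∣ x ^ 2 - 33 * y ^ 2) : 25 ∣ x ^ 2 - 33 * y ^ 2 := by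
  have hxy : x % 5 = 0 ∧ y % 5 = 0 := by
    have hx : x % 5 = 0 ∨ x % 5 = 1 ∨ x % 5 = 2 ∨ x % 5 = 3 ∨ x % 5 = 4 := by omega
    have hy : y % 5 = 0 ∨ y % 5 = 1 ∨ y % 5 = 2 ∨ y % 5 = 3 ∨ y % 5 = 4 := by omega
    have h := Int.emod_eq_zero_of_dvd h
    rcases hx with hx | hx | hx | hx | hx <;> rcases hy with hy | hy | hy | hy | hy <;>
      simp [pow_two, Int.sub_emod, Int.mul_emod, hx, hy] at h ⊢
  obtain ⟨a, rfl⟩ := Int.dvd_of_emod_eq_zero hxy.1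
  obtain ⟨b, rfl⟩ := Int.dvd_of_emod_eq_zero hxy.2
  exact ⟨a ^ 2 - 33 * b ^ 2, by ring⟩

lemma eq_zero_of_sq_eq (x y : ℤ) (h : x ^ 2 = 33 * y ^ 2) : y = 0 := by
  by_contra hy
  have hy' : (y : ℚ) ≠ 0 := by exact_mod_cast hy
  have h' : (x : ℚ) ^ 2 = 33 * (y : ℚ) ^ 2 := by exact_mod_cast h
  have : IsSquare (33 : ℚ) := ⟨x / y, by field_simp; linarith⟩
  have h33 : ¬ IsSquare (33 : ℚ) := by
    rw [show (33 : ℚ) = ((33 : ℕ) : ℚ) by norm_num, Rat.isSquare_natCast_iff]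
    rintro ⟨r, hr⟩
    have : r < 6 := by nlinarith
    interval_cases r <;> omega
  exact h33 this

/-- A prime modulo which `33` is a square is, up to a sign, a norm from `ℚ(√33)`; a norm
`x² - 33 y²` prime to `3` is `1` modulo `3`, and this determines the sign. -/
lemma norm_or_neg_norm (l : ℕ) (hl : l.Prime) (hodd : l % 2 = 1) (h5 : l % 5 ≠ 0)
    (hJ : jacobiSym 33 l = 1) :
    (l % 3 = 1 → IsNorm33 l) ∧ (l % 3 = 2 → IsNorm33 (-l)) := by
  have : Fact l.Prime := ⟨hl⟩
  have hsq : ∃ s : ℤ, (l : ℤ) ∣ s ^ 2 - 33 := by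
    rw [← jacobiSym.legendreSym.to_jacobiSym] at hJ
    have hne : ((33 : ℤ) : ZMod l) ≠ 0 := fun h0 => by
      rw [(legendreSym.eq_zero_iff l 33).mpr h0] at hJ
      exact zero_ne_one hJ
    obtain ⟨r, hr⟩ := (legendreSym.eq_one_iff l hne).mp hJ
    refine ⟨r.val, ?_⟩
    rw [← ZMod.intCast_zmod_eq_zero_iff_dvd]
    push_cast at hr ⊢
    rw [ZMod.natCast_zmod_val, hr]
    ring
  obtain ⟨s, hs⟩ := hsq
  obtain ⟨x, y, hne, hx, hy, hd⟩ := exists_small l hl.pos s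
  have hdvd : (l : ℤ) ∣ x ^ 2 - 33 * y ^ 2 := by
    have := (hd.mul_right (x + s * y)).add (hs.mul_right (y ^ 2))
    rwa [show (x - s * y) * (x + s * y) + (s ^ 2 - 33) * y ^ 2 = x ^ 2 - 33 * y ^ 2 by ring] at this
  obtain ⟨k, hk⟩ := hdvd
  have hlpos : (0 : ℤ) < l := by exact_mod_cast hl.pos
  have hk1 : k ≤ 6 := by
    by_contra! hc
    nlinarith [sq_nonneg y]
  have hk2 : -5 ≤ k := by
    by_contra! hc
    nlinarith [sq_nonneg x]
  have hkQ : (x : ℚ) ^ 2 - 33 * (y : ℚ) ^ 2 = l * k := by exact_mod_cast hk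
  have hk0 : k ≠ 0 := by
    rintro rfl
    have hy0 := eq_zero_of_sq_eq x y (by linarith)
    subst hy0
    have : x = 0 := by simpa using hk
    tauto
  have hk4 : k % 4 ≠ 2 := by
    intro h
    have x4 := sq_mod_four x
    have y4 := sq_mod_four y
    have h2 : (l * k : ℤ) % 4 = 2 := by
      have hl4 : (l : ℤ) % 4 = 1 ∨ (l : ℤ) % 4 = 3 := by omega
      rcases hl4 with h' | h' <;> simp [Int.mul_emod, h, h']
    clear hx hy hne hk0 hk1 hk2
    omega
  have hk5 : ¬ 5 ∣ k := by
    rintro hc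
    have hfive := five_case x y (hk ▸ hc.mul_left _)
    obtain ⟨c, rfl⟩ := hc
    have h5l : (5 : ℤ) ∣ l * c := by
      obtain ⟨e, he⟩ := hfive
      exact ⟨e, by linarith⟩
    rcases Int.Prime.dvd_mul' Nat.prime_five h5l with h | h <;> omega
  have h3 : IsNorm33 (1 / 3) := ⟨6 / 3, 1 / 3, by norm_num⟩
  have h4 : IsNorm33 (1 / 4) := ⟨1 / 2, 0, by norm_num⟩
  have hn : IsNorm33 (l * k) := ⟨x, y, hkQ⟩
  -- For `k = ±3` the residue modulo `3` is visible only after dividing the equation by `3`.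
  have hthree : 3 ∣ k → 9 ∣ x ^ 2 := by
    rintro ⟨c, rfl⟩
    have : (3 : ℤ) ∣ x ^ 2 := ⟨l * c + 11 * y ^ 2, by linarith⟩
    obtain ⟨z, rfl⟩ := Int.prime_three.dvd_of_dvd_pow this
    exact ⟨z ^ 2, by ring⟩
  have y3 := sq_mod_three y
  have x3 := sq_mod_three x
  clear hne hx hy hs hd
  interval_cases k
  · omega
  · refine ⟨fun _ => by omega, fun _ => ?_⟩
    exact (hn.mul h4).congr (by push_cast; ring)
  · have hz := hthree (by norm_num)
    refine ⟨fun _ => by omega, fun _ => ?_⟩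
    exact (hn.mul h3).congr (by push_cast; ring)
  · omega
  · refine ⟨fun _ => by omega, fun _ => ?_⟩
    exact (hn).congr (by push_cast; ring)
  · omega
  · refine ⟨fun _ => ?_, fun _ => by omega⟩
    exact (hn).congr (by push_cast; ring)
  · omega
  · have hz := hthree (by norm_num)
    refine ⟨fun _ => ?_, fun _ => by omega⟩
    exact (hn.mul h3).congr (by push_cast; ring)
  · refine ⟨fun _ => ?_, fun _ => by omega⟩
    exact (hn.mul h4).congr (by push_cast; ring)
  · omega
  · omega

/-- Quadratic reciprocity: as `33 ≡ 1 (mod 4)`, the symbol `(33 / l)` equals `(l / 33)`, which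
depends only on `l` modulo `33`. -/
lemma jacobi_eq (l : ℕ) (hodd : Odd l) (r : ℕ) (hr : l % 33 = r)
    (h : jacobiSym r 33 = 1) : jacobiSym 33 l = 1 := by
  have h1 := jacobiSym.quadratic_reciprocity_one_mod_four (a := 33) (b := l) (by norm_num) hodd
  push_cast at h1
  rw [h1, jacobiSym.mod_left]
  subst hr
  exact_mod_cast h

/-- for primes `p`, `q` satisfying the listed congruence conditions,
`(33, 3pq) = (33, 33)` in `Br(ℚ)`. -/
theorem stmt10 (p q : ℕ)
    (hp : p.Prime) (hq : q.Prime)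
    (hp3 : p % 3 = 2) (hp4 : p % 4 = 3) (hp5 : p % 5 = 2 ∨ p % 5 = 3)
    (hp7 : p % 7 = 1 ∨ p % 7 = 2 ∨ p % 7 = 4)
    (hp11 : p % 11 = 2 ∨ p % 11 = 6 ∨ p % 11 = 7 ∨ p % 11 = 8 ∨ p % 11 = 10)
    (hq3 : q % 3 = 1) (hq4 : q % 4 = 1) (hq5 : q % 5 = 1 ∨ q % 5 = 4)
    (hq7 : q % 7 = 1 ∨ q % 7 = 2 ∨ q % 7 = 4)
    (hq11 : q % 11 = 1 ∨ q % 11 = 3 ∨ q % 11 = 4 ∨ q % 11 = 5 ∨ q % 11 = 9) :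
    quatEq 33 (3 * (p : ℚ) * (q : ℚ)) 33 33 := by
  have hpo : Odd p := Nat.odd_iff.mpr (by omega)
  have hqo : Odd q := Nat.odd_iff.mpr (by omega)
  have hp5n : p % 5 ≠ 0 := by rcases hp5 with h | h <;> simp [h]
  have hq5n : q % 5 ≠ 0 := by rcases hq5 with h | h <;> simp [h]
  clear hp5 hq5 hp7 hq7
  have hJp : jacobiSym 33 p = 1 := by
    clear hq11
    rcases hp11 with h | h | h | h | h
    · exact jacobi_eq p hpo 2 (by omega) (by norm_num)
    · exact jacobi_eq p hpo 17 (by omega) (by norm_num)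
    · exact jacobi_eq p hpo 29 (by omega) (by norm_num)
    · exact jacobi_eq p hpo 8 (by omega) (by norm_num)
    · exact jacobi_eq p hpo 32 (by omega) (by norm_num)
  have hJq : jacobiSym 33 q = 1 := by
    clear hp11
    rcases hq11 with h | h | h | h | h
    · exact jacobi_eq q hqo 1 (by omega) (by norm_num)
    · exact jacobi_eq q hqo 25 (by omega) (by norm_num)
    · exact jacobi_eq q hqo 4 (by omega) (by norm_num)
    · exact jacobi_eq q hqo 16 (by omega) (by norm_num)
    · exact jacobi_eq q hqo 31 (by omega) (by norm_num)
  have hnp := (norm_or_neg_norm p hp (Nat.odd_iff.mp hpo) hp5n hJp).2 hp3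
  have hnq := (norm_or_neg_norm q hq (Nat.odd_iff.mp hqo) hq5n hJq).1 hq3
  -- `-1/11` is the norm of `(11 + 2√33) / 11`.
  have h11 : IsNorm33 (-1 / 11) := ⟨1, 2 / 11, by norm_num⟩
  have hp0 : (p : ℚ) ≠ 0 := by exact_mod_cast hp.ne_zero
  have hq0 : (q : ℚ) ≠ 0 := by exact_mod_cast hq.ne_zero
  have := quatEq_of_norm_s10 33 _ (by simp [hp0, hq0]) ((hnp.mul hnq).mul h11)
  convert this using 1
  ring
end

section
/- (35, 7pq) = 0 in Br(ℚ). -/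
/-!
The algebra `(35, 7pq)` over `ℚ` is split as soon as `7pq` is a norm `r² - 35 s²` from `ℚ(√35)`
(`quatSplit_of_norm`), and for this it suffices that `5x² + pq y² = 7z²` has a nontrivial integer
solution: put `r = 7z/y`, `s = x/y`.

Such a solution comes from the Thue-style proof of Legendre's theorem on ternary forms. The
congruence conditions on `p` and `q`, with quadratic reciprocity, make `35` a square modulo `p` and
`q`, `pq/7` a square modulo `5`, and `-pq/5` a square modulo `7`, so the form `5x² + pq y² - 7z²`
has a linear factor modulo each of these primes. A pigeonhole argument then gives a small nonzero
vector on which the form is divisible by `35pq` (`exists_cong`). By size the value is `0` or `35pq`,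
and in the latter case a composition identity still gives a nontrivial zero (`exists_zero`).
-/

open Quaternion

/-- Triviality of the quaternion Brauer class `(a,b)` in `Br(ℚ)`: the class `(a,b)` is
zero iff the quaternion algebra is split, i.e. isomorphic to `M₂(ℚ)`. -/
def quatSplit (a b : ℚ) : Prop :=
  Nonempty (ℍ[ℚ, a, b] ≃ₐ[ℚ] Matrix (Fin 2) (Fin 2) ℚ)

/-- The matrices `i = (0 a; 1 0)` and `j = (r, -as; s, -r)` satisfy `i² = a`, `j² = r² - a s²` and
`ij = -ji`. Here `i` is multiplication by `√a` on `ℚ(√a)`, and `j` is conjugation followed by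
multiplication by `r + s√a`, in the basis `1, √a`. -/
def matBasis (a r s : ℚ) :
    QuaternionAlgebra.Basis (Matrix (Fin 2) (Fin 2) ℚ) a 0 (r ^ 2 - a * s ^ 2) where
  i := !![0, a; 1, 0]
  j := !![r, -a * s; s, -r]
  k := !![a * s, -a * r; r, -a * s]
  i_mul_i := by
    ext u v; fin_cases u <;> fin_cases v <;> simp
  j_mul_j := by
    ext u v; fin_cases u <;> fin_cases v <;> simp <;> ring
  i_mul_j := by
    ext u v; fin_cases u <;> fin_cases v <;> simp
  j_mul_i := by
    ext u v; fin_cases u <;> fin_cases v <;> simp <;> ring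

/-- `(a, b)` is split when `b` is a nonzero norm `r² - a s²` from `ℚ(√a)`: the homomorphism to
`M₂(ℚ)` given by `matBasis` is injective, hence bijective as both sides have dimension four. -/
theorem quatSplit_of_norm (a r s : ℚ) (ha : a ≠ 0) (h : r ^ 2 - a * s ^ 2 ≠ 0) :
    quatSplit a (r ^ 2 - a * s ^ 2) := by
  have hinj : Function.Injective (matBasis a r s).liftHom := by
    rw [injective_iff_map_eq_zero]
    rintro ⟨t, x, y, z⟩ hw
    have h00 := congrFun (congrFun hw 0) 0
    have h01 := congrFun (congrFun hw 0) 1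
    have h10 := congrFun (congrFun hw 1) 0
    have h11 := congrFun (congrFun hw 1) 1
    simp [matBasis, QuaternionAlgebra.Basis.liftHom, QuaternionAlgebra.Basis.lift,
      Matrix.algebraMap_matrix_apply] at h00 h01 h10 h11
    have ht : t = 0 := by linarith
    have hu : a * (-x + y * s + z * r) = 0 := by linarith
    have hu' := (mul_eq_zero.mp hu).resolve_left ha
    have hx : x = 0 := by linarith
    subst ht hx
    have hy : y = 0 := by
      have : y * (r ^ 2 - a * s ^ 2) = 0 := by linear_combination r * h00 - a * s * h10
      exact (mul_eq_zero.mp this).resolve_right h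
    have hz : z = 0 := by
      have : z * (r ^ 2 - a * s ^ 2) = 0 := by linear_combination r * h10 - s * h00
      exact (mul_eq_zero.mp this).resolve_right h
    subst hy hz
    rfl
  have hfr : Module.finrank ℚ ℍ[ℚ, a, r ^ 2 - a * s ^ 2] =
      Module.finrank ℚ (Matrix (Fin 2) (Fin 2) ℚ) := by
    rw [QuaternionAlgebra.finrank_eq_four, Module.finrank_matrix]
    simp
  refine ⟨AlgEquiv.ofBijective _ ⟨hinj, ?_⟩⟩
  exact (LinearMap.injective_iff_surjective_of_finrank_eq_finrank
    (f := (matBasis a r s).liftHom.toLinearMap) hfr).mp hinj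

theorem exists_sq_eq_35 {r : ℕ} (hr : r.Prime) (h5 : r ≠ 5) (h7 : r ≠ 7)
    (hJ : jacobiSym ((35 : ℕ) : ℤ) r = 1) : ∃ t : ZMod r, t ^ 2 = 35 := by
  have := Fact.mk hr
  have hne : ((35 : ℕ) : ZMod r) ≠ 0 := by
    rw [Ne, ZMod.natCast_eq_zero_iff, show 35 = 5 * 7 from rfl, hr.dvd_mul,
      Nat.prime_dvd_prime_iff_eq hr (by norm_num), Nat.prime_dvd_prime_iff_eq hr (by norm_num)]
    tauto
  rw [← jacobiSym.legendreSym.to_jacobiSym] at hJ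
  obtain ⟨t, ht⟩ := (legendreSym.eq_one_iff' r hne).mp hJ
  exact ⟨t, by rw [sq, ← ht]; norm_num⟩

theorem exists_sq_eq_35_of_three_mod_four {p : ℕ} (hp : p.Prime) (hp4 : p % 4 = 3)
    (hp5 : p % 5 = 2 ∨ p % 5 = 3) (hp7 : p % 7 = 1 ∨ p % 7 = 2 ∨ p % 7 = 4) :
    ∃ t : ZMod p, t ^ 2 = 35 := by
  have h35 : p % 35 = 2 ∨ p % 35 = 8 ∨ p % 35 = 18 ∨ p % 35 = 22 ∨ p % 35 = 23 ∨
      p % 35 = 32 := by omega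
  refine exists_sq_eq_35 hp (by omega) (by omega) ?_
  rw [jacobiSym.quadratic_reciprocity_three_mod_four (by norm_num) hp4, jacobiSym.mod_left,
    ← Int.natCast_mod]
  rcases h35 with h | h | h | h | h | h <;> rw [h] <;> norm_num

theorem exists_sq_eq_35_of_one_mod_four {q : ℕ} (hq : q.Prime) (hq4 : q % 4 = 1)
    (hq5 : q % 5 = 1 ∨ q % 5 = 4) (hq7 : q % 7 = 1 ∨ q % 7 = 2 ∨ q % 7 = 4) :
    ∃ t : ZMod q, t ^ 2 = 35 := by
  have h35 : q % 35 = 1 ∨ q % 35 = 4 ∨ q % 35 = 9 ∨ q % 35 = 11 ∨ q % 35 = 16 ∨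
      q % 35 = 29 := by omega
  refine exists_sq_eq_35 hq (by omega) (by omega) ?_
  rw [jacobiSym.quadratic_reciprocity_one_mod_four' (by decide) hq4, jacobiSym.mod_left,
    ← Int.natCast_mod]
  rcases h35 with h | h | h | h | h | h <;> rw [h] <;> norm_num

/-- Nontrivial solutions of `5x² + pq y² ≡ 7z² (mod 35pq)` within the bounds `x² ≤ 7pq`, `y² ≤ 35`,
`z² ≤ 5pq`. Modulo each of `5, 7, p, q` the form vanishes on the kernel of a linear form, and the
box of nonnegative triples within the bounds has more than `35pq` points. -/
theorem exists_cong (p q : ℕ) (hp : p.Prime) (hq : q.Prime) (hpq : p ≠ q)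
    (hp57 : p ≠ 5 ∧ p ≠ 7) (hq57 : q ≠ 5 ∧ q ≠ 7)
    (tp : ZMod p) (htp : tp ^ 2 = 35) (tq : ZMod q) (htq : tq ^ 2 = 35)
    (t5 : ZMod 5) (ht5 : 7 * t5 ^ 2 = p * q) (t7 : ZMod 7) (ht7 : 5 * t7 ^ 2 = -(p * q)) :
    ∃ x y z : ℤ, (x, y, z) ≠ (0, 0, 0) ∧ x ^ 2 ≤ 7 * p * q ∧ y ^ 2 ≤ 35 ∧ z ^ 2 ≤ 5 * p * q ∧
      (35 * p * q : ℤ) ∣ 5 * x ^ 2 + p * q * y ^ 2 - 7 * z ^ 2 := by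
  have := Fact.mk hp
  have := Fact.mk hq
  -- a linear map on whose kernel the form is divisible by `35pq`
  let φ : ℤ × ℤ × ℤ → ZMod 5 × ZMod 7 × ZMod p × ZMod q := fun v =>
    ((v.2.2 : ZMod 5) - t5 * v.2.1, (v.1 : ZMod 7) - t7 * v.2.1,
      7 * (v.2.2 : ZMod p) - tp * v.1, 7 * (v.2.2 : ZMod q) - tq * v.1)
  have hφ : ∀ v w, φ v = φ w → φ (v - w) = 0 := by
    intro v w h
    simp only [φ, Prod.mk.injEq] at h
    obtain ⟨h1, h2, h3, h4⟩ := h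
    simp only [φ, Prod.fst_sub, Prod.snd_sub, Int.cast_sub]
    refine Prod.ext ?_ (Prod.ext ?_ (Prod.ext ?_ ?_))
    · simp only [Prod.fst_zero]; linear_combination h1
    · simp only [Prod.fst_zero, Prod.snd_zero]; linear_combination h2
    · simp only [Prod.fst_zero, Prod.snd_zero]; linear_combination h3
    · simp only [Prod.snd_zero]; linear_combination h4
  let A := Nat.sqrt (7 * p * q)
  let B := Nat.sqrt 35
  let C := Nat.sqrt (5 * p * q)
  let S : Finset (ℤ × ℤ × ℤ) :=
    Finset.Icc (0 : ℤ) A ×ˢ Finset.Icc (0 : ℤ) B ×ˢ Finset.Icc (0 : ℤ) C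
  have hcard : (Finset.univ : Finset (ZMod 5 × ZMod 7 × ZMod p × ZMod q)).card < S.card := by
    have hS : S.card = (A + 1) * ((B + 1) * (C + 1)) := by
      simp only [S, Finset.card_product, Int.card_Icc]
      simp only [sub_zero]
      rfl
    have hU : (Finset.univ : Finset (ZMod 5 × ZMod 7 × ZMod p × ZMod q)).card
        = 5 * (7 * (p * q)) := by
      simp [ZMod.card]
    rw [hS, hU]
    have hA : 7 * p * q < (A + 1) ^ 2 := Nat.lt_succ_sqrt' _
    have hB : 35 < (B + 1) ^ 2 := Nat.lt_succ_sqrt' _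
    have hC : 5 * p * q < (C + 1) ^ 2 := Nat.lt_succ_sqrt' _
    refine lt_of_pow_lt_pow_left₀ 2 (Nat.zero_le _) ?_
    calc (5 * (7 * (p * q))) ^ 2 = (7 * p * q) * (35 * (5 * p * q)) := by ring
      _ < (A + 1) ^ 2 * ((B + 1) ^ 2 * (C + 1) ^ 2) := by gcongr
      _ = _ := by ring
  obtain ⟨v, hv, w, hw, hne, hvw⟩ := Finset.exists_ne_map_eq_of_card_lt_of_maps_to hcard
    (f := φ) (fun _ _ => Finset.mem_univ _)
  have h0 := hφ v w hvw
  obtain ⟨x, y, z⟩ := v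
  obtain ⟨x', y', z'⟩ := w
  simp only [S, Finset.mem_product, Finset.mem_Icc] at hv hw
  have key : ∀ (N : ℕ) (a b : ℤ), 0 ≤ a → a ≤ Nat.sqrt N → 0 ≤ b → b ≤ Nat.sqrt N →
      (a - b) ^ 2 ≤ (N : ℤ) := by
    intro N a b h1 h2 h3 h4
    have h5 : ((Nat.sqrt N : ℤ)) ^ 2 ≤ N := by exact_mod_cast Nat.sqrt_le' N
    refine le_trans (sq_le_sq.mpr ?_) h5
    rw [abs_of_nonneg (by positivity : (0 : ℤ) ≤ Nat.sqrt N), abs_le]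
    constructor <;> linarith
  refine ⟨x - x', y - y', z - z', ?_, ?_, ?_, ?_, ?_⟩
  · intro h
    apply hne
    simp only [Prod.mk.injEq, sub_eq_zero] at h ⊢
    exact h
  · have := key (7 * p * q) x x' hv.1.1 hv.1.2 hw.1.1 hw.1.2
    exact_mod_cast this
  · have := key 35 y y' hv.2.1.1 hv.2.1.2 hw.2.1.1 hw.2.1.2
    exact_mod_cast this
  · have := key (5 * p * q) z z' hv.2.2.1 hv.2.2.2 hw.2.2.1 hw.2.2.2
    exact_mod_cast this
  simp only [Prod.mk_sub_mk] at h0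
  generalize x - x' = X at h0 ⊢
  generalize y - y' = Y at h0 ⊢
  generalize z - z' = Z at h0 ⊢
  simp only [φ, Prod.mk_eq_zero] at h0
  obtain ⟨h5, h7, hp', hq'⟩ := h0
  have h7ne : ∀ {r : ℕ}, r.Prime → r ≠ 7 → (7 : ZMod r) ≠ 0 := by
    intro r hr h7 h
    have : ((7 : ℕ) : ZMod r) = 0 := by exact_mod_cast h
    rw [ZMod.natCast_eq_zero_iff] at this
    exact h7 ((Nat.prime_dvd_prime_iff_eq hr (by norm_num)).mp this)
  have d5 : ((5 : ℕ) : ℤ) ∣ 5 * X ^ 2 + p * q * Y ^ 2 - 7 * Z ^ 2 := by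
    rw [← ZMod.intCast_zmod_eq_zero_iff_dvd]
    push_cast
    have e : (5 : ZMod 5) = 0 := rfl
    linear_combination (X : ZMod 5) ^ 2 * e - 7 * ((Z : ZMod 5) + t5 * Y) * h5 - (Y : ZMod 5) ^ 2 * ht5
  have d7 : ((7 : ℕ) : ℤ) ∣ 5 * X ^ 2 + p * q * Y ^ 2 - 7 * Z ^ 2 := by
    rw [← ZMod.intCast_zmod_eq_zero_iff_dvd]
    push_cast
    have e : (7 : ZMod 7) = 0 := rfl
    linear_combination -(Z : ZMod 7) ^ 2 * e + 5 * ((X : ZMod 7) + t7 * Y) * h7 + (Y : ZMod 7) ^ 2 * ht7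
  have dp : (p : ℤ) ∣ 5 * X ^ 2 + p * q * Y ^ 2 - 7 * Z ^ 2 := by
    rw [← ZMod.intCast_zmod_eq_zero_iff_dvd]
    push_cast
    have e : (p : ZMod p) = 0 := ZMod.natCast_self p
    refine (mul_eq_zero.mp ?_).resolve_left (h7ne hp hp57.2)
    linear_combination 7 * (q : ZMod p) * Y ^ 2 * e - (7 * (Z : ZMod p) + tp * X) * hp'
      - (X : ZMod p) ^ 2 * htp
  have dq : (q : ℤ) ∣ 5 * X ^ 2 + p * q * Y ^ 2 - 7 * Z ^ 2 := by
    rw [← ZMod.intCast_zmod_eq_zero_iff_dvd]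
    push_cast
    have e : (q : ZMod q) = 0 := ZMod.natCast_self q
    refine (mul_eq_zero.mp ?_).resolve_left (h7ne hq hq57.2)
    linear_combination 7 * (p : ZMod q) * Y ^ 2 * e - (7 * (Z : ZMod q) + tq * X) * hq'
      - (X : ZMod q) ^ 2 * htq
  have c1 : IsCoprime ((5 : ℕ) : ℤ) ((7 : ℕ) : ℤ) := by
    rw [Nat.isCoprime_iff_coprime]; norm_num
  have P5 : Nat.Prime 5 := by norm_num
  have P7 : Nat.Prime 7 := by norm_num
  have c2 : IsCoprime (((5 : ℕ) : ℤ) * ((7 : ℕ) : ℤ)) (p : ℤ) := by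
    refine IsCoprime.mul_left ?_ ?_ <;> rw [Nat.isCoprime_iff_coprime, Nat.coprime_primes] <;>
      first | assumption | exact hp57.1.symm | exact hp57.2.symm
  have c3 : IsCoprime (((5 : ℕ) : ℤ) * ((7 : ℕ) : ℤ) * p) (q : ℤ) := by
    refine IsCoprime.mul_left (IsCoprime.mul_left ?_ ?_) ?_ <;>
      rw [Nat.isCoprime_iff_coprime, Nat.coprime_primes] <;>
      first | assumption | exact hq57.1.symm | exact hq57.2.symm
  have := c3.mul_dvd (c2.mul_dvd (c1.mul_dvd d5 d7) dp) dq
  norm_num at this ⊢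
  exact this

/-- The strict bounds leave only the values `0` and `35n` for `5x² + n y² - 7z²`. In the second case
`5x² + n y² = 7(z² + 5n)`, and multiplying by the norm `z² + 5n` gives, by the composition identity
`(5x² + n y²)(z² + 5n) = 5(xz + ny)² + n(yz - 5x)²`, a zero of the form. -/
theorem exists_zero (n : ℤ) (hn : 0 < n) (x y z : ℤ) (hne : (x, y, z) ≠ (0, 0, 0))
    (hx : x ^ 2 < 7 * n) (hy : y ^ 2 < 35) (hz : z ^ 2 < 5 * n)
    (hd : 35 * n ∣ 5 * x ^ 2 + n * y ^ 2 - 7 * z ^ 2) :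
    ∃ x y z : ℤ, (x, y, z) ≠ (0, 0, 0) ∧ 5 * x ^ 2 + n * y ^ 2 = 7 * z ^ 2 := by
  obtain ⟨k, hk⟩ := hd
  have hk1 : k < 2 := by
    by_contra! h
    nlinarith [sq_nonneg z]
  have hk2 : -1 < k := by
    by_contra! h
    nlinarith [sq_nonneg x, sq_nonneg y]
  obtain rfl | rfl : k = 0 ∨ k = 1 := by omega
  · exact ⟨x, y, z, hne, by linarith⟩
  · refine ⟨x * z + n * y, y * z - 5 * x, z ^ 2 + 5 * n, ?_, ?_⟩
    · intro h
      simp only [Prod.mk.injEq] at h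
      nlinarith [sq_nonneg z]
    · linear_combination (z ^ 2 + 5 * n) * hk

theorem sq_ne_prime_mul {r : ℕ} (hr : r.Prime) (m x : ℤ) (hm : ¬ (r : ℤ) ∣ m) :
    x ^ 2 ≠ r * m := by
  intro h
  have hr' : Prime (r : ℤ) := Nat.prime_iff_prime_int.mp hr
  obtain ⟨c, rfl⟩ := hr'.dvd_of_dvd_pow (Dvd.intro m h.symm)
  apply hm
  refine ⟨c ^ 2, mul_left_cancel₀ hr'.ne_zero ?_⟩
  rw [← h]; ring

/-- for primes `p`, `q` satisfying the listed congruence conditions,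
`(35, 7pq) = 0` in `Br(ℚ)`. -/
theorem stmt11 (p q : ℕ)
    (hp : p.Prime) (hq : q.Prime)
    (hp3 : p % 3 = 2) (hp4 : p % 4 = 3) (hp5 : p % 5 = 2 ∨ p % 5 = 3)
    (hp7 : p % 7 = 1 ∨ p % 7 = 2 ∨ p % 7 = 4)
    (hp11 : p % 11 = 2 ∨ p % 11 = 6 ∨ p % 11 = 7 ∨ p % 11 = 8 ∨ p % 11 = 10)
    (hq3 : q % 3 = 1) (hq4 : q % 4 = 1) (hq5 : q % 5 = 1 ∨ q % 5 = 4)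
    (hq7 : q % 7 = 1 ∨ q % 7 = 2 ∨ q % 7 = 4)
    (hq11 : q % 11 = 1 ∨ q % 11 = 3 ∨ q % 11 = 4 ∨ q % 11 = 5 ∨ q % 11 = 9) :
    quatSplit 35 (7 * (p : ℚ) * (q : ℚ)) := by
  obtain ⟨tp, htp⟩ := exists_sq_eq_35_of_three_mod_four hp hp4 hp5 hp7
  obtain ⟨tq, htq⟩ := exists_sq_eq_35_of_one_mod_four hq hq4 hq5 hq7
  obtain ⟨t5, ht5⟩ : ∃ t5 : ZMod 5, 7 * t5 ^ 2 = p * q := by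
    rw [← ZMod.natCast_mod p 5, ← ZMod.natCast_mod q 5]
    rcases hp5 with h | h <;> rcases hq5 with h' | h' <;> rw [h, h'] <;> decide
  obtain ⟨t7, ht7⟩ : ∃ t7 : ZMod 7, 5 * t7 ^ 2 = -(p * q) := by
    rw [← ZMod.natCast_mod p 7, ← ZMod.natCast_mod q 7]
    rcases hp7 with h | h | h <;> rcases hq7 with h' | h' | h' <;> rw [h, h'] <;> decide
  have hpq7 : ¬ ((7 : ℕ) : ℤ) ∣ (p : ℤ) * q := by
    rw [← Nat.cast_mul, Int.natCast_dvd_natCast, Nat.Prime.dvd_mul (by norm_num),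
      Nat.dvd_iff_mod_eq_zero, Nat.dvd_iff_mod_eq_zero]
    clear * - hp7 hq7
    omega
  have hpq5 : ¬ ((5 : ℕ) : ℤ) ∣ (p : ℤ) * q := by
    rw [← Nat.cast_mul, Int.natCast_dvd_natCast, Nat.Prime.dvd_mul (by norm_num),
      Nat.dvd_iff_mod_eq_zero, Nat.dvd_iff_mod_eq_zero]
    clear * - hp5 hq5
    omega
  obtain ⟨x, y, z, hne, hx, hy, hz, hd⟩ := exists_cong p q hp hq (by omega) (by omega) (by omega)
    tp htp tq htq t5 ht5 t7 ht7
  have hx' := sq_ne_prime_mul (r := 7) (by norm_num) _ x hpq7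
  have hy' := sq_ne_prime_mul (r := 7) (by norm_num) 5 y (by norm_num)
  have hz' := sq_ne_prime_mul (r := 5) (by norm_num) _ z hpq5
  have hn : (0 : ℤ) < p * q := by have := hp.pos; have := hq.pos; positivity
  rw [mul_assoc] at hx hz hd
  push_cast at hx' hy' hz'
  obtain ⟨x, y, z, hne, h⟩ := exists_zero (p * q) hn x y z hne (lt_of_le_of_ne hx hx')
    (lt_of_le_of_ne hy (by simpa using hy')) (lt_of_le_of_ne hz hz') hd
  have hy0 : y ≠ 0 := by
    rintro rfl
    -- otherwise `35 = (7z/x)²` would be a rational square, or `x = z = 0`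
    have hxz : (35 * x ^ 2 : ℤ) = (7 * z) ^ 2 := by linear_combination 7 * h
    have hx0 : x = 0 := by
      by_contra hx0
      have hsq : IsSquare (35 : ℚ) := ⟨7 * z / x, by
        have : (x : ℚ) ≠ 0 := by exact_mod_cast hx0
        field_simp
        have hxzQ : (35 * x ^ 2 : ℚ) = (7 * z) ^ 2 := by exact_mod_cast hxz
        linear_combination hxzQ⟩
      rw [show (35 : ℚ) = ((35 : ℕ) : ℚ) by norm_num, Rat.isSquare_natCast_iff] at hsq
      obtain ⟨k, hk⟩ := hsq
      have hk6 : k < 6 := by nlinarith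
      interval_cases k <;> omega
    subst hx0
    apply hne
    simpa using h.symm
  have hyQ : (y : ℚ) ≠ 0 := by exact_mod_cast hy0
  have hQ : (5 * x ^ 2 + p * q * y ^ 2 : ℚ) = 7 * z ^ 2 := by exact_mod_cast h
  have hb : (7 * (p : ℚ) * (q : ℚ)) = (7 * z / y) ^ 2 - 35 * (x / y) ^ 2 := by
    field_simp
    linear_combination 7 * hQ
  rw [hb]
  apply quatSplit_of_norm _ _ _ (by norm_num)
  rw [← hb]
  have : (0 : ℚ) < p * q := by exact_mod_cast hn
  rw [mul_assoc]
  positivity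
end

section
/- (33, 7pq) ∉ S; that is, the class (33, 7pq) does not lie in the 𝔽₂-span of (33,33), (33,35), (35,35) in Br(ℚ). -/
/-!
The class `(33, 7pq)` is nonsplit at `3` and split at `5` and `11`, whereas among the places
`3, 5, 11` the class `(33,33)` is nonsplit exactly at `3, 11`, the class `(33,35)` at `3, 5, 11`,
and the class `(35,35)` nowhere. So for each choice of coefficients some `l ∈ {3, 5, 11}` makes
exactly one of the summands nonsplit over `ℚ_l`: take `l = 5` if `(33,33)` and `(33,35)` both
occur, `l = 11` if exactly one of them occurs, and `l = 3` if neither does.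

Such a sum cannot be zero. A splitting of the tensor product makes four commuting quaternion
algebras act on `V = ℚ_l ^ 16`. Each of the three split ones contains an idempotent which halves
the trace of every operator commuting with that algebra (`QuatPair.exists_idempotent`), so the
product of the three idempotents projects onto a plane stable under the fourth algebra. But the
latter has an anisotropic norm form, hence acts freely on nonzero vectors, and needs dimension at
least `4` (`QuatPair.not_trace_eq_two`). This is `no_four_quatPairs`, transported to tensor products
in `tensor_not_split`.

The local computations are Hensel's lemma (`isSquare_padic_of_dvd`) on the split side and, on the
nonsplit side, the parity of the valuation of `x² - u y²` for a nonsquare unit `u`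
(`norm_form_even`, `norm_form_aniso`).
-/

open Quaternion TensorProduct

/-- The Brauer class of the quaternion algebra `(a,b)` over `ℚ` when `e = true`, and the
trivial Brauer class (represented by the split algebra `M₂(ℚ)`) when `e = false`.
Tensoring with this algebra realizes adding `e•(a,b)` to a Brauer class. -/
def optQ (e : Bool) (a b : ℚ) : Type :=
  match e with
  | true => ℍ[ℚ, a, b]
  | false => Matrix (Fin 2) (Fin 2) ℚ

instance (e : Bool) (a b : ℚ) : Ring (optQ e a b) :=
  match e with
  | true => inferInstanceAs (Ring ℍ[ℚ, a, b])
  | false => inferInstanceAs (Ring (Matrix (Fin 2) (Fin 2) ℚ))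

instance (e : Bool) (a b : ℚ) : Algebra ℚ (optQ e a b) :=
  match e with
  | true => inferInstanceAs (Algebra ℚ ℍ[ℚ, a, b])
  | false => inferInstanceAs (Algebra ℚ (Matrix (Fin 2) (Fin 2) ℚ))

/-- Membership of the quaternion class `(x,y)` in the `𝔽₂`-span
`S = ⟨(33,33),(33,35),(35,35)⟩ ⊆ Br(ℚ)`: there are `e1,e2,e3 ∈ {0,1}` such that
`(x,y) + e1·(33,33) + e2·(33,35) + e3·(35,35) = 0`; the sum of these Brauer classes is
represented by the tensor product below (a central simple algebra of dimension `4⁴ = 256`),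
and it is zero iff that algebra is split, i.e. isomorphic to `M₁₆(ℚ)`. -/
def memS (x y : ℚ) : Prop :=
  ∃ e1 e2 e3 : Bool,
    Nonempty
      ((ℍ[ℚ, x, y] ⊗[ℚ] (optQ e1 33 33 ⊗[ℚ] (optQ e2 33 35 ⊗[ℚ] optQ e3 35 35))) ≃ₐ[ℚ]
        Matrix (Fin 16) (Fin 16) ℚ)

/-- `I` and `J` are the images of the standard generators of the quaternion algebra `(a, b)`
under a representation on `V`. -/
structure QuatPair {K V : Type*} [Field K] [AddCommGroup V] [Module K V]
    (a b : K) (I J : Module.End K V) : Prop where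
  sq_left : I * I = a • 1
  sq_right : J * J = b • 1
  anti : I * J = -(J * I)

/-- The quaternion algebra `(a, b)` over `K` has a pure quaternion of square `1`. For nonzero `a`
and `b` in characteristic other than `2` this says that it is split. -/
def SplitSymbol {K : Type*} [Field K] (a b : K) : Prop :=
  ∃ x y z : K, a * x ^ 2 + b * y ^ 2 - a * b * z ^ 2 = 1

/-- The norm form of the quaternion algebra `(a, b)` over `K` is anisotropic, that is, `(a, b)`
is a division algebra. -/
def AnisoSymbol {K : Type*} [Field K] (a b : K) : Prop :=
  ∀ x y z w : K, x ^ 2 - a * y ^ 2 - b * z ^ 2 + a * b * w ^ 2 = 0 →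
    x = 0 ∧ y = 0 ∧ z = 0 ∧ w = 0

/-! ### Quaternion pairs acting on a vector space -/

section Representations

variable {K V : Type*} [Field K] [AddCommGroup V] [Module K V]

/-- Conjugation by `s` fixes `X` and negates `t`. -/
theorem trace_anticomm_mul [CharZero K] {c : K} (hc : c ≠ 0)
    {s t X : Module.End K V} (hs : s * s = c • 1) (hst : t * s = -(s * t)) (hX : Commute s X) :
    LinearMap.trace K V (t * X) = 0 := by
  have h1 : LinearMap.trace K V (s * (t * X * s)) = c * LinearMap.trace K V (t * X) := by
    rw [LinearMap.trace_mul_comm, mul_assoc, hs]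
    simp
  have h2 : s * (t * X * s) = -(c • (t * X)) := by
    have : s * t = -(t * s) := by rw [hst, neg_neg]
    calc s * (t * X * s) = (s * t) * (X * s) := by noncomm_ring
      _ = -(t * (s * s) * X) := by rw [this, ← hX.eq]; noncomm_ring
      _ = _ := by rw [hs]; simp
  rw [h2, map_neg, map_smul, smul_eq_mul] at h1
  have : 2 * (c * LinearMap.trace K V (t * X)) = 0 := by linear_combination -h1
  simpa [hc] using this

/-- A representation of a split quaternion algebra contains an idempotent which halves the trace
of every operator commuting with the representation. -/
theorem QuatPair.exists_idempotent [CharZero K] {a b : K} (ha : a ≠ 0) (hb : b ≠ 0)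
    {I J : Module.End K V} (h : QuatPair a b I J) (hs : SplitSymbol a b) :
    ∃ e : Module.End K V, e * e = e ∧
      (∀ T, Commute T I → Commute T J → Commute T e) ∧
      ∀ X, Commute I X → Commute J X →
        2 * LinearMap.trace K V (e * X) = LinearMap.trace K V X := by
  obtain ⟨x, y, z, hxyz⟩ := hs
  obtain ⟨hI, hJ, hIJ⟩ := h
  have hJI : J * I = -(I * J) := by rw [hIJ, neg_neg]
  -- `t` is the pure quaternion of square `1`, and `(1 + t) / 2` the idempotent.
  set t : Module.End K V := x • I + y • J + z • (I * J) with ht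
  have hIIJ : I * (I * J) = a • J := by rw [← mul_assoc, hI]; simp
  have hIJI : I * J * I = -(a • J) := by rw [mul_assoc, hJI, mul_neg, hIIJ]
  have hIJJ : I * J * J = b • I := by rw [mul_assoc, hJ]; simp
  have hJIJ : J * (I * J) = -(b • I) := by rw [← mul_assoc, hJI, neg_mul, hIJJ]
  have hIJIJ : I * J * (I * J) = -((a * b) • 1) := by
    rw [mul_assoc, hJIJ, mul_neg, mul_smul_comm, hI, smul_smul, mul_comm]
  have htt : t * t = 1 := by
    have : t * t = (a * x ^ 2 + b * y ^ 2 - a * b * z ^ 2) • 1 := by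
      simp only [ht, add_mul, mul_add, smul_mul_assoc, mul_smul_comm, hI, hJ, hIIJ, hIJI, hIJJ,
        hJIJ, hIJIJ, hJI]
      module
    rw [this, hxyz, one_smul]
  refine ⟨(2⁻¹ : K) • (1 + t), ?_, ?_, ?_⟩
  · simp only [smul_mul_assoc, mul_smul_comm, add_mul, mul_add, htt, one_mul, mul_one]
    module
  · intro T h1 h2
    refine Commute.smul_right (Commute.add_right (Commute.one_right _) ?_) _
    exact (((h1.smul_right x).add_right (h2.smul_right y)).add_right
      ((h1.mul_right h2).smul_right z))
  · intro X h1 h2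
    have e1 := trace_anticomm_mul hb hJ hIJ h2
    have e2 := trace_anticomm_mul ha hI hJI h1
    have e3 : LinearMap.trace K V (I * J * X) = 0 :=
      trace_anticomm_mul hb hJ (by rw [hIJJ, hJIJ, neg_neg]) h2
    simp only [ht, smul_mul_assoc, add_mul, one_mul, map_smul, map_add, e1, e2, e3, smul_eq_mul]
    field_simp
    ring

/-- Nonzero invariant subspaces of a representation of a quaternion division algebra have
dimension at least `4`, because a nonzero vector has trivial annihilator in that algebra; so no
equivariant projection has rank `2`. -/
theorem QuatPair.not_trace_eq_two [CharZero K] [FiniteDimensional K V] {a b : K}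
    {I J P : Module.End K V} (h : QuatPair a b I J) (hs : AnisoSymbol a b)
    (hP : P * P = P) (hIP : Commute I P) (hJP : Commute J P) :
    LinearMap.trace K V P ≠ 2 := by
  intro htr
  have hfr : Module.finrank K (LinearMap.range P) = 2 := by
    have := (LinearMap.IsIdempotentElem.isProj_range P hP).trace
    rw [htr] at this
    exact_mod_cast this.symm
  obtain ⟨hI, hJ, hIJ⟩ := h
  have hJI : J * I = -(I * J) := by rw [hIJ, neg_neg]
  obtain ⟨v, hv⟩ : ∃ v : LinearMap.range P, v ≠ 0 := by
    have : Nontrivial (LinearMap.range P) :=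
      Module.nontrivial_of_finrank_pos (R := K) (by omega)
    exact exists_ne 0
  have inv : ∀ T : Module.End K V, Commute T P → T v ∈ LinearMap.range P := by
    intro T hT
    obtain ⟨w, hw⟩ := v.2
    refine ⟨T w, ?_⟩
    rw [← hw, ← Module.End.mul_apply, ← Module.End.mul_apply, hT.eq]
  let f : (Fin 4 → K) →ₗ[K] LinearMap.range P :=
    Fintype.linearCombination K
      ![v, ⟨I v, inv I hIP⟩, ⟨J v, inv J hJP⟩, ⟨(I * J) v, inv _ (hIP.mul_left hJP)⟩]
  have hker : LinearMap.ker f ≠ ⊥ :=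
    LinearMap.ker_ne_bot_of_finrank_lt (by rw [hfr]; simp)
  obtain ⟨c, hc, hc0⟩ := (Submodule.ne_bot_iff _).1 hker
  have hcv : (c 0 • (1 : Module.End K V) + c 1 • I + c 2 • J + c 3 • (I * J)) v = 0 := by
    have := congrArg (Subtype.val) (LinearMap.mem_ker.1 hc)
    simpa [f, Fintype.linearCombination_apply, Fin.sum_univ_four] using this
  have hIIJ : I * (I * J) = a • J := by rw [← mul_assoc, hI]; simp
  have hIJI : I * J * I = -(a • J) := by rw [mul_assoc, hJI, mul_neg, hIIJ]
  have hIJJ : I * J * J = b • I := by rw [mul_assoc, hJ]; simp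
  have hJIJ : J * (I * J) = -(b • I) := by rw [← mul_assoc, hJI, neg_mul, hIJJ]
  have hIJIJ : I * J * (I * J) = -((a * b) • 1) := by
    rw [mul_assoc, hJIJ, mul_neg, mul_smul_comm, hI, smul_smul, mul_comm]
  have hnorm : (c 0 • (1 : Module.End K V) - c 1 • I - c 2 • J - c 3 • (I * J)) *
      (c 0 • (1 : Module.End K V) + c 1 • I + c 2 • J + c 3 • (I * J)) =
      (c 0 ^ 2 - a * c 1 ^ 2 - b * c 2 ^ 2 + a * b * c 3 ^ 2) • 1 := by
    simp only [sub_mul, mul_add, smul_mul_assoc, mul_smul_comm, hI, hJ, hIIJ,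
      hIJI, hIJJ, hJIJ, hIJIJ, hJI, one_mul, mul_one]
    module
  have hz := congrArg (fun T : Module.End K V => T v) hnorm
  simp only [Module.End.mul_apply, hcv, map_zero, LinearMap.smul_apply, Module.End.one_apply] at hz
  have hn := (smul_eq_zero.1 hz.symm).resolve_right (by simpa using hv)
  obtain ⟨h0, h1, h2, h3⟩ := hs _ _ _ _ hn
  refine hc0 (funext fun i => ?_)
  fin_cases i <;> assumption

/-- Four pairwise commuting quaternion algebras, exactly one of which is a division algebra,
cannot act on a space of dimension `16`: cutting down by the idempotents of the three split
factors leaves a plane on which the division algebra would act. -/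
theorem no_four_quatPairs [CharZero K] [FiniteDimensional K V]
    (hV : Module.finrank K V = 16)
    {a b : Fin 4 → K} (ha : ∀ k, a k ≠ 0) (hb : ∀ k, b k ≠ 0)
    {I J : Fin 4 → Module.End K V} (h : ∀ k, QuatPair (a k) (b k) (I k) (J k))
    (hcomm : ∀ k l, k ≠ l → Commute (I k) (I l) ∧ Commute (I k) (J l) ∧
      Commute (J k) (I l) ∧ Commute (J k) (J l))
    (k₀ : Fin 4) (h₀ : AnisoSymbol (a k₀) (b k₀))
    (hs : ∀ k, k ≠ k₀ → SplitSymbol (a k) (b k)) : False := by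
  have key : ∀ s : Finset (Fin 4), k₀ ∉ s → ∃ P : Module.End K V, P * P = P ∧
      (∀ T, (∀ k ∈ s, Commute T (I k) ∧ Commute T (J k)) → Commute T P) ∧
      2 ^ s.card * LinearMap.trace K V P = 16 := by
    intro s
    induction s using Finset.induction_on with
    | empty =>
      intro _
      exact ⟨1, one_mul 1, fun T _ => Commute.one_right T, by
        simp [LinearMap.trace_one, hV]⟩
    | insert k s hk ih =>
      intro hk₀
      rw [Finset.mem_insert, not_or] at hk₀
      obtain ⟨P, hP, hPc, hPt⟩ := ih hk₀.2
      obtain ⟨e, he, hec, het⟩ :=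
        (h k).exists_idempotent (ha k) (hb k) (hs k (Ne.symm hk₀.1))
      have hne : ∀ l ∈ s, k ≠ l := fun l hl hkl => hk (hkl ▸ hl)
      have hIP : Commute (I k) P := hPc _ fun l hl =>
        ⟨(hcomm k l (hne l hl)).1, (hcomm k l (hne l hl)).2.1⟩
      have hJP : Commute (J k) P := hPc _ fun l hl =>
        ⟨(hcomm k l (hne l hl)).2.2.1, (hcomm k l (hne l hl)).2.2.2⟩
      have heP : Commute P e := hec P hIP.symm hJP.symm
      refine ⟨e * P, ?_, ?_, ?_⟩
      · calc e * P * (e * P) = e * (P * e) * P := by noncomm_ring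
          _ = (e * e) * (P * P) := by rw [heP.eq]; noncomm_ring
          _ = e * P := by rw [he, hP]
      · intro T hT
        have hTk := hT k (Finset.mem_insert_self _ _)
        exact (hec T hTk.1 hTk.2).mul_right
          (hPc T fun l hl => hT l (Finset.mem_insert_of_mem hl))
      · rw [Finset.card_insert_of_notMem hk, pow_succ, mul_assoc, het P hIP hJP, hPt]
  obtain ⟨P, hP, hPc, hPt⟩ := key (Finset.univ.erase k₀) (by simp)
  have hne : ∀ k ∈ Finset.univ.erase k₀, k₀ ≠ k := fun k hk => (Finset.ne_of_mem_erase hk).symm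
  refine (h k₀).not_trace_eq_two h₀ hP
    (hPc _ fun k hk => ⟨(hcomm _ k (hne k hk)).1, (hcomm _ k (hne k hk)).2.1⟩)
    (hPc _ fun k hk => ⟨(hcomm _ k (hne k hk)).2.2.1, (hcomm _ k (hne k hk)).2.2.2⟩) ?_
  rw [Finset.card_erase_of_mem (Finset.mem_univ _), Finset.card_univ, Fintype.card_fin] at hPt
  norm_num at hPt
  linear_combination hPt / 8

end Representations

/-! ### Division symbols over the `l`-adic numbers -/

section Local

variable {l : ℕ} [Fact l.Prime]

/-- Hensel's lemma for square roots of `l`-adic units, with `l` odd. -/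
theorem isSquare_padic_of_dvd {u : ℤ} (r : ℤ) (h : (l : ℤ) ∣ r ^ 2 - u)
    (hr : ¬ (l : ℤ) ∣ 2 * r) : ∃ s : ℚ_[l], s ^ 2 = u := by
  have hd : ‖(Polynomial.derivative (Polynomial.X ^ 2 - Polynomial.C (u : ℤ_[l]))).aeval
      (r : ℤ_[l])‖ = 1 := by
    have h1 : ¬ ‖((2 * r : ℤ) : ℤ_[l])‖ < 1 := by rwa [PadicInt.norm_int_lt_one_iff_dvd]
    have h2 := le_antisymm (PadicInt.norm_le_one _) (not_lt.1 h1)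
    simpa [Polynomial.aeval_def, Polynomial.eval₂_eq_eval_map, one_add_one_eq_two] using h2
  obtain ⟨z, hz, -⟩ := hensels_lemma
    (F := (Polynomial.X ^ 2 - Polynomial.C (u : ℤ_[l]) : Polynomial ℤ_[l])) (a := (r : ℤ_[l])) (by
      rw [hd, one_pow]
      have := (PadicInt.norm_int_lt_one_iff_dvd (p := l) _).2 h
      simpa [Polynomial.aeval_def, Polynomial.eval₂_eq_eval_map] using this)
  refine ⟨z, ?_⟩
  have hz' : z ^ 2 = (u : ℤ_[l]) := by
    simpa [Polynomial.aeval_def, Polynomial.eval₂_eq_eval_map, sub_eq_zero] using hz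
  exact_mod_cast congrArg (fun w : ℤ_[l] => (w : ℚ_[l])) hz'

theorem norm_eq_one_of_toZMod_ne_zero {x : ℤ_[l]} (h : PadicInt.toZMod x ≠ 0) : ‖x‖ = 1 := by
  by_contra hx
  refine h ?_
  rw [← RingHom.mem_ker, PadicInt.ker_toZMod, IsLocalRing.mem_maximalIdeal, mem_nonunits_iff,
    PadicInt.isUnit_iff]
  exact hx

/-- The norm form of the unramified quadratic extension has even valuation. -/
theorem norm_form_even {u : ℤ} (hu : ∀ t : ZMod l, t ^ 2 ≠ u) (x y : ℚ_[l])
    (hxy : x ≠ 0 ∨ y ≠ 0) :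
    ∃ z : ℚ_[l], z ≠ 0 ∧ ‖x ^ 2 - u * y ^ 2‖ = ‖z‖ ^ 2 := by
  have hu0 : (u : ZMod l) ≠ 0 := fun h => hu 0 (by simp [h])
  rcases le_total ‖y‖ ‖x‖ with h | h
  · have hx : x ≠ 0 := by
      rintro rfl
      simp at h
      simp_all
    refine ⟨x, hx, ?_⟩
    let t : ℤ_[l] := ⟨y / x, by
      rw [norm_div]; exact div_le_one_of_le₀ h (norm_nonneg _)⟩
    have h1 : ‖(1 - (u : ℤ_[l]) * t ^ 2)‖ = 1 := by
      refine norm_eq_one_of_toZMod_ne_zero fun h0 => ?_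
      simp only [map_sub, map_one, map_mul, map_pow, map_intCast] at h0
      have ht : PadicInt.toZMod t ≠ 0 := by
        intro ht; simp [ht] at h0
      refine hu (PadicInt.toZMod t)⁻¹ ?_
      field_simp
      linear_combination h0
    have h2 : x ^ 2 - u * y ^ 2 = x ^ 2 * ((1 - (u : ℤ_[l]) * t ^ 2 : ℤ_[l]) : ℚ_[l]) := by
      push_cast
      simp only [t]
      field_simp
    rw [h2, norm_mul, PadicInt.padic_norm_e_of_padicInt, h1, norm_pow, mul_one]
  · have hy : y ≠ 0 := by
      rintro rfl
      simp at h
      simp_all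
    refine ⟨y, hy, ?_⟩
    let t : ℤ_[l] := ⟨x / y, by
      rw [norm_div]; exact div_le_one_of_le₀ h (norm_nonneg _)⟩
    have h1 : ‖(t ^ 2 - (u : ℤ_[l]))‖ = 1 := by
      refine norm_eq_one_of_toZMod_ne_zero fun h0 => ?_
      simp only [map_sub, map_pow, map_intCast] at h0
      exact hu _ (sub_eq_zero.1 h0)
    have h2 : x ^ 2 - u * y ^ 2 = y ^ 2 * ((t ^ 2 - (u : ℤ_[l]) : ℤ_[l]) : ℚ_[l]) := by
      push_cast
      simp only [t]
      field_simp
    rw [h2, norm_mul, PadicInt.padic_norm_e_of_padicInt, h1, norm_pow, mul_one]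

/-- For a nonsquare unit `u` and a uniformizer `l * m`, the two sides of the equation have
valuations of different parity unless both vanish. -/
theorem norm_form_aniso {u m : ℤ} (hu : ∀ t : ZMod l, t ^ 2 ≠ u) (hm : ¬ (l : ℤ) ∣ m)
    {x y z w : ℚ_[l]}
    (h : x ^ 2 - u * y ^ 2 = (l * m) * (z ^ 2 - u * w ^ 2)) :
    x = 0 ∧ y = 0 ∧ z = 0 ∧ w = 0 := by
  have hl1 : (1 : ℝ) < l := by exact_mod_cast (Fact.out : l.Prime).one_lt
  have hm1 : ‖(m : ℚ_[l])‖ = 1 := by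
    refine le_antisymm (Padic.norm_int_le_one m) (not_lt.1 fun hlt => hm ?_)
    exact (Padic.norm_intCast_lt_one_iff).1 hlt
  have hm0 : (m : ℚ_[l]) ≠ 0 := by
    intro h0; simp [h0] at hm1
  have hl0 : (l : ℚ_[l]) ≠ 0 := by exact_mod_cast (Fact.out : l.Prime).ne_zero
  have zero : ∀ x y : ℚ_[l], x ^ 2 - u * y ^ 2 = 0 → x = 0 ∧ y = 0 := by
    intro x y h0
    by_contra hc
    obtain ⟨s, hs, hs'⟩ := norm_form_even hu x y (by tauto)
    rw [h0, norm_zero] at hs'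
    exact hs (by simpa using hs'.symm)
  by_cases hzw : z = 0 ∧ w = 0
  · obtain ⟨rfl, rfl⟩ := hzw
    have := zero x y (by rw [h]; simp)
    tauto
  exfalso
  have hxy : x ≠ 0 ∨ y ≠ 0 := by
    by_contra hc
    push Not at hc
    rw [hc.1, hc.2] at h
    refine hzw (zero z w ?_)
    have h' : (l * m : ℚ_[l]) * (z ^ 2 - u * w ^ 2) = 0 := by rw [← h]; simp
    exact (mul_eq_zero.1 h').resolve_left (mul_ne_zero hl0 hm0)
  obtain ⟨s, hs, hs'⟩ := norm_form_even hu x y hxy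
  obtain ⟨r, hr, hr'⟩ := norm_form_even hu z w (by tauto)
  have hn : ‖s‖ ^ 2 = (l : ℝ)⁻¹ * ‖r‖ ^ 2 := by
    rw [← hs', h, norm_mul, norm_mul, hr', hm1, Padic.norm_p, mul_one]
  rw [Padic.norm_eq_zpow_neg_valuation hs, Padic.norm_eq_zpow_neg_valuation hr, ← zpow_natCast,
    ← zpow_natCast, ← zpow_mul, ← zpow_mul, ← zpow_neg_one, ← zpow_add₀ (by positivity)] at hn
  have := zpow_right_injective₀ (by positivity) hl1.ne' hn
  omega

/-- `(l * m, u)` is a division algebra for `u` a nonsquare modulo `l` and `m` prime to `l`. -/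
theorem anisoSymbol_left {u m : ℤ} (hu : ∀ t : ZMod l, t ^ 2 ≠ u) (hm : ¬ (l : ℤ) ∣ m) :
    AnisoSymbol ((l * m : ℚ_[l])) (u : ℚ_[l]) := by
  intro x y z w h
  have := norm_form_aniso hu hm (x := x) (y := z) (z := y) (w := w) (by linear_combination h)
  tauto

theorem anisoSymbol_right {u m : ℤ} (hu : ∀ t : ZMod l, t ^ 2 ≠ u) (hm : ¬ (l : ℤ) ∣ m) :
    AnisoSymbol (u : ℚ_[l]) ((l * m : ℚ_[l])) := by
  intro x y z w h
  exact norm_form_aniso hu hm (by linear_combination h)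

/-- `(c, c) = (c, -1)` for the uniformizer `c = l * m`. -/
theorem anisoSymbol_self {m : ℤ} (hu : ∀ t : ZMod l, t ^ 2 ≠ -1) (hm : ¬ (l : ℤ) ∣ m) :
    AnisoSymbol ((l * m : ℚ_[l])) ((l * m : ℚ_[l])) := by
  intro x y z w h
  have hl0 : (l : ℚ_[l]) ≠ 0 := by exact_mod_cast (Fact.out : l.Prime).ne_zero
  have hm0 : (m : ℚ_[l]) ≠ 0 := by
    rintro h0
    exact hm (by rw [Int.cast_eq_zero.1 h0]; exact dvd_zero _)
  obtain ⟨h1, h2, h3, h4⟩ := norm_form_aniso (u := -1) (by simpa using hu) hm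
    (x := x) (y := l * m * w) (z := y) (w := z) (by push_cast; linear_combination h)
  simp_all

end Local

/-! ### Split symbols -/

section Split

variable {K : Type*} [Field K]

theorem splitSymbol_one : SplitSymbol (1 : K) 1 := ⟨1, 0, 0, by ring⟩

theorem splitSymbol_of_right_sq {a b s : K} (hb : b ≠ 0) (hs : s ^ 2 = b) :
    SplitSymbol a b := by
  have : s ≠ 0 := by rintro rfl; exact hb (by simp [← hs])
  exact ⟨0, s⁻¹, 0, by field_simp; simp [hs]⟩

theorem splitSymbol_self_of_neg_one_sq {a s : K} (ha : a ≠ 0) (hs : s ^ 2 = -1) :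
    SplitSymbol a a :=
  ⟨0, 0, s / a, by field_simp; simp [hs]⟩

/-- The witness is `35 * (1 ^ 2 + (s / 35) ^ 2) = 1`. -/
theorem splitSymbol_thirtyFive {s : K} (h35 : (35 : K) ≠ 0) (hs : s ^ 2 = -34 * 35) :
    SplitSymbol (35 : K) 35 :=
  ⟨1, s / 35, 0, by field_simp; linear_combination hs⟩

end Split

/-! ### Tensor products of quaternion algebras -/

section Algebras

theorem quat_pair (a b : ℚ) : ∃ i j : ℍ[ℚ, a, b], i * i = a • 1 ∧ j * j = b • 1 ∧
    i * j = -(j * i) := by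
  refine ⟨⟨0, 1, 0, 0⟩, ⟨0, 0, 1, 0⟩, ?_, ?_, ?_⟩ <;> ext <;> simp

theorem matrix_pair : ∃ i j : Matrix (Fin 2) (Fin 2) ℚ,
    i * i = (1 : ℚ) • 1 ∧ j * j = (1 : ℚ) • 1 ∧ i * j = -(j * i) := by
  refine ⟨!![1, 0; 0, -1], !![0, 1; 1, 0], ?_, ?_, ?_⟩ <;>
    ext i j <;> fin_cases i <;> fin_cases j <;> simp

/-- The split summand `M₂(ℚ)` is treated as the quaternion algebra `(1, 1)`. -/
theorem optQ_pair (e : Bool) (a b : ℚ) : ∃ i j : optQ e a b,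
    i * i = (bif e then a else 1) • 1 ∧ j * j = (bif e then b else 1) • 1 ∧
    i * j = -(j * i) := by
  cases e with
  | true => exact quat_pair a b
  | false => exact matrix_pair

/-- The images in `A ⊗ B ⊗ C ⊗ D` of one element of each tensor factor. -/
def factorElts {A B C D : Type} [Ring A] [Ring B] [Ring C] [Ring D]
    [Algebra ℚ A] [Algebra ℚ B] [Algebra ℚ C] [Algebra ℚ D] (x₀ : A) (x₁ : B) (x₂ : C) (x₃ : D) :
    Fin 4 → A ⊗[ℚ] (B ⊗[ℚ] (C ⊗[ℚ] D)) :=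
  ![x₀ ⊗ₜ (1 ⊗ₜ (1 ⊗ₜ 1)), 1 ⊗ₜ (x₁ ⊗ₜ (1 ⊗ₜ 1)), 1 ⊗ₜ (1 ⊗ₜ (x₂ ⊗ₜ 1)),
    1 ⊗ₜ (1 ⊗ₜ (1 ⊗ₜ x₃))]

theorem factorElts_commute {A B C D : Type} [Ring A] [Ring B] [Ring C] [Ring D]
    [Algebra ℚ A] [Algebra ℚ B] [Algebra ℚ C] [Algebra ℚ D] (x₀ y₀ : A) (x₁ y₁ : B)
    (x₂ y₂ : C) (x₃ y₃ : D) (k l : Fin 4) (hkl : k ≠ l) :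
    Commute (factorElts x₀ x₁ x₂ x₃ k) (factorElts y₀ y₁ y₂ y₃ l) := by
  change _ * _ = _ * _
  fin_cases k <;> fin_cases l <;>
    first
    | exact absurd rfl hkl
    | simp [factorElts]

/-- Obstruction to the splitting of a tensor product of four algebras generated by quaternion
pairs: over some extension `K` of `ℚ`, exactly one of the four symbols is nonsplit. -/
theorem tensor_not_split {A B C D : Type} [Ring A] [Ring B] [Ring C] [Ring D]
    [Algebra ℚ A] [Algebra ℚ B] [Algebra ℚ C] [Algebra ℚ D]
    {a b : Fin 4 → ℚ}
    (hA : ∃ i j : A, i * i = a 0 • 1 ∧ j * j = b 0 • 1 ∧ i * j = -(j * i))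
    (hB : ∃ i j : B, i * i = a 1 • 1 ∧ j * j = b 1 • 1 ∧ i * j = -(j * i))
    (hC : ∃ i j : C, i * i = a 2 • 1 ∧ j * j = b 2 • 1 ∧ i * j = -(j * i))
    (hD : ∃ i j : D, i * i = a 3 • 1 ∧ j * j = b 3 • 1 ∧ i * j = -(j * i))
    (ha : ∀ k, a k ≠ 0) (hb : ∀ k, b k ≠ 0)
    (K : Type) [Field K] [CharZero K]
    (k₀ : Fin 4) (h₀ : AnisoSymbol (a k₀ : K) (b k₀ : K))
    (hs : ∀ k, k ≠ k₀ → SplitSymbol (a k : K) (b k : K))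
    (φ : (A ⊗[ℚ] (B ⊗[ℚ] (C ⊗[ℚ] D))) →ₐ[ℚ] Matrix (Fin 16) (Fin 16) ℚ) : False := by
  obtain ⟨i0, j0, hA⟩ := hA
  obtain ⟨i1, j1, hB⟩ := hB
  obtain ⟨i2, j2, hC⟩ := hC
  obtain ⟨i3, j3, hD⟩ := hD
  let ψ : Matrix (Fin 16) (Fin 16) ℚ →+* Module.End K (Fin 16 → K) :=
    (Matrix.toLinAlgEquiv' (R := K) (n := Fin 16)).toAlgHom.toRingHom.comp
      (algebraMap ℚ K).mapMatrix
  let θ : (A ⊗[ℚ] (B ⊗[ℚ] (C ⊗[ℚ] D))) →+* Module.End K (Fin 16 → K) := ψ.comp φ.toRingHom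
  let I := factorElts i0 i1 i2 i3
  let J := factorElts j0 j1 j2 j3
  have hθ : ∀ (c : ℚ), θ (c • 1) = (c : K) • 1 := by
    intro c
    have h1 : φ (c • 1) = c • 1 := by
      rw [map_smul, (show φ 1 = 1 from φ.toRingHom.map_one)]
    change ψ (φ (c • 1)) = _
    rw [h1]
    change Matrix.toLinAlgEquiv' ((algebraMap ℚ K).mapMatrix (c • 1)) = _
    have h2 : (algebraMap ℚ K).mapMatrix (c • (1 : Matrix (Fin 16) (Fin 16) ℚ)) = (c : K) • 1 := by
      ext i j
      by_cases hij : i = j <;> simp [hij]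
    rw [h2, map_smul, map_one]
  have hI : ∀ k, I k * I k = a k • 1 := by
    intro k
    fin_cases k <;>
      simp [I, factorElts, hA, hB, hC, hD, Algebra.TensorProduct.one_def, TensorProduct.tmul_smul,
        ← TensorProduct.smul_tmul']
  have hJ : ∀ k, J k * J k = b k • 1 := by
    intro k
    fin_cases k <;>
      simp [J, factorElts, hA, hB, hC, hD, Algebra.TensorProduct.one_def, TensorProduct.tmul_smul,
        ← TensorProduct.smul_tmul']
  have hIJ : ∀ k, I k * J k = -(J k * I k) := by
    intro k
    fin_cases k <;>
      simp [I, J, factorElts, hA.2.2, hB.2.2, hC.2.2, hD.2.2, TensorProduct.tmul_neg, TensorProduct.neg_tmul]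
  refine no_four_quatPairs (K := K) (V := Fin 16 → K) (by simp)
    (a := fun k => (a k : K)) (b := fun k => (b k : K))
    (fun k => by exact_mod_cast ha k) (fun k => by exact_mod_cast hb k)
    (I := fun k => θ (I k)) (J := fun k => θ (J k)) (fun k => ⟨?_, ?_, ?_⟩) ?_ k₀ h₀ hs
  · rw [← map_mul, hI, hθ]
  · rw [← map_mul, hJ, hθ]
  · rw [← map_mul, ← map_mul, hIJ, map_neg]
  · intro k l hkl
    refine ⟨Commute.map ?_ θ, Commute.map ?_ θ, Commute.map ?_ θ, Commute.map ?_ θ⟩ <;>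
      exact factorElts_commute _ _ _ _ _ _ _ _ k l hkl

end Algebras

/-! ### The symbols at 3, 5 and 11 -/

section Symbols

instance fact_prime_five : Fact (Nat.Prime 5) := ⟨by norm_num⟩

instance fact_prime_eleven : Fact (Nat.Prime 11) := ⟨by norm_num⟩

/-- Dropping a factor replaces its symbol by the split symbol `(1, 1)`. -/
theorem splitSymbol_bif {K : Type*} [Field K] [CharZero K] (e : Bool) {a b : ℚ}
    (h : SplitSymbol (a : K) (b : K)) :
    SplitSymbol ((bif e then a else 1 : ℚ) : K) ((bif e then b else 1 : ℚ) : K) := by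
  cases e with
  | true => exact h
  | false => simpa using splitSymbol_one (K := K)

/-- The form of `tensor_not_split` for the algebras occurring in `memS`. -/
theorem memS_obstruction {y : ℚ} (hy : y ≠ 0) {e1 e2 e3 : Bool}
    (K : Type) [Field K] [CharZero K] (k₀ : Fin 4)
    (h₀ : AnisoSymbol
      (((![33, bif e1 then 33 else 1, bif e2 then 33 else 1, bif e3 then 35 else 1] :
        Fin 4 → ℚ) k₀ : ℚ) : K)
      (((![y, bif e1 then 33 else 1, bif e2 then 35 else 1, bif e3 then 35 else 1] :
        Fin 4 → ℚ) k₀ : ℚ) : K))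
    (h : k₀ ≠ 0 → SplitSymbol ((33 : ℚ) : K) (y : K))
    (h1 : k₀ ≠ 1 → SplitSymbol ((bif e1 then 33 else 1 : ℚ) : K) ((bif e1 then 33 else 1 : ℚ) : K))
    (h2 : k₀ ≠ 2 → SplitSymbol ((bif e2 then 33 else 1 : ℚ) : K) ((bif e2 then 35 else 1 : ℚ) : K))
    (h3 : k₀ ≠ 3 → SplitSymbol ((bif e3 then 35 else 1 : ℚ) : K) ((bif e3 then 35 else 1 : ℚ) : K))
    (φ : (ℍ[ℚ, 33, y] ⊗[ℚ] (optQ e1 33 33 ⊗[ℚ] (optQ e2 33 35 ⊗[ℚ] optQ e3 35 35))) ≃ₐ[ℚ]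
        Matrix (Fin 16) (Fin 16) ℚ) : False := by
  refine tensor_not_split (quat_pair 33 y) (optQ_pair e1 33 33) (optQ_pair e2 33 35)
    (optQ_pair e3 35 35)
    (a := ![33, bif e1 then 33 else 1, bif e2 then 33 else 1, bif e3 then 35 else 1])
    (b := ![y, bif e1 then 33 else 1, bif e2 then 35 else 1, bif e3 then 35 else 1])
    ?_ ?_ K k₀ h₀ ?_ φ.toAlgHom
  · cases e1 <;> cases e2 <;> cases e3 <;> intro k <;> fin_cases k <;> simp
  · cases e1 <;> cases e2 <;> cases e3 <;> intro k <;> fin_cases k <;> simp [hy]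
  · intro k hk
    fin_cases k
    exacts [h hk.symm, h1 hk.symm, h2 hk.symm, h3 hk.symm]

/-- The residue conditions on `N` make `(33, N)` nonsplit at `3` and split at `5` and `11`; they
hold for `N = 7pq`. -/
theorem not_memS_of_residues (N : ℕ) (h0 : N ≠ 0) (hN3 : N % 3 = 2) (hN5 : N % 5 = 1 ∨ N % 5 = 4)
    (hN11 : N % 11 = 1 ∨ N % 11 = 3 ∨ N % 11 = 4 ∨ N % 11 = 5 ∨ N % 11 = 9) :
    ¬ memS 33 (N : ℚ) := by
  rintro ⟨e1, e2, e3, ⟨φ⟩⟩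
  have hy : (N : ℚ) ≠ 0 := by exact_mod_cast h0
  have hN : ∀ (l : ℕ) [Fact l.Prime] (s : ℚ_[l]), s ^ 2 = ((N : ℤ) : ℚ_[l]) →
      SplitSymbol ((33 : ℚ) : ℚ_[l]) ((N : ℚ) : ℚ_[l]) := by
    intro l _ s hs
    refine splitSymbol_of_right_sq (s := s) (by exact_mod_cast h0) ?_
    rw [hs]; push_cast; ring
  have h35 : ∀ (l : ℕ) [Fact l.Prime] (s : ℚ_[l]), s ^ 2 = ((-34 * 35 : ℤ) : ℚ_[l]) →
      SplitSymbol ((35 : ℚ) : ℚ_[l]) ((35 : ℚ) : ℚ_[l]) := by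
    intro l _ s hs
    have := splitSymbol_thirtyFive (K := ℚ_[l]) (s := s) (by norm_num)
      (by rw [hs]; push_cast; ring)
    exact_mod_cast this
  -- At `11`, `(33, N)` and `(35, 35)` are split.
  have hN_11 : SplitSymbol ((33 : ℚ) : ℚ_[11]) ((N : ℚ) : ℚ_[11]) := by
    obtain ⟨s, hs⟩ : ∃ s : ℚ_[11], s ^ 2 = ((N : ℤ) : ℚ_[11]) := by
      rcases hN11 with h | h | h | h | h
      · exact isSquare_padic_of_dvd 1 (by omega) (by decide)
      · exact isSquare_padic_of_dvd 5 (by omega) (by decide)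
      · exact isSquare_padic_of_dvd 2 (by omega) (by decide)
      · exact isSquare_padic_of_dvd 4 (by omega) (by decide)
      · exact isSquare_padic_of_dvd 3 (by omega) (by decide)
    exact hN 11 s hs
  have h35_11 : SplitSymbol ((35 : ℚ) : ℚ_[11]) ((35 : ℚ) : ℚ_[11]) := by
    obtain ⟨s, hs⟩ := isSquare_padic_of_dvd (l := 11) (u := -34 * 35) 3 (by decide) (by decide)
    exact h35 11 s hs
  cases e2 with
  | true =>
    cases e1 with
    | true =>
      -- At `5`, only `(33, 35)` is nonsplit.
      obtain ⟨i, hi⟩ : ∃ i : ℚ_[5], i ^ 2 = -1 := by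
        obtain ⟨s, hs⟩ := isSquare_padic_of_dvd (l := 5) (u := -1) 2 (by decide) (by decide)
        exact ⟨s, by simpa using hs⟩
      obtain ⟨s, hs⟩ : ∃ s : ℚ_[5], s ^ 2 = ((N : ℤ) : ℚ_[5]) := by
        rcases hN5 with h | h
        · exact isSquare_padic_of_dvd 1 (by omega) (by decide)
        · exact isSquare_padic_of_dvd 2 (by omega) (by decide)
      refine memS_obstruction hy ℚ_[5] 2 ?_ (fun _ => hN 5 s hs) (fun _ => ?_)
        (fun h => absurd rfl h) (fun _ => ?_) φ
      · have := anisoSymbol_right (l := 5) (u := 33) (m := 7) (by decide) (by decide)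
        norm_num at this
        simpa using this
      · exact splitSymbol_self_of_neg_one_sq (by norm_num) hi
      · exact splitSymbol_bif _ (splitSymbol_self_of_neg_one_sq (by norm_num) hi)
    | false =>
      -- At `11`, only `(33, 35)` is nonsplit.
      refine memS_obstruction hy ℚ_[11] 2 ?_ (fun _ => hN_11)
        (fun _ => by simpa using splitSymbol_one) (fun h => absurd rfl h)
        (fun _ => splitSymbol_bif _ h35_11) φ
      have := anisoSymbol_left (l := 11) (u := 35) (m := 3) (by decide) (by decide)
      norm_num at this
      simpa using this
  | false =>
    cases e1 with
    | true =>
      -- At `11`, only `(33, 33)` is nonsplit.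
      refine memS_obstruction hy ℚ_[11] 1 ?_ (fun _ => hN_11) (fun h => absurd rfl h)
        (fun _ => by simpa using splitSymbol_one) (fun _ => splitSymbol_bif _ h35_11) φ
      have := anisoSymbol_self (l := 11) (m := 3) (by decide) (by decide)
      norm_num at this
      simpa using this
    | false =>
      -- At `3`, only `(33, N)` is nonsplit.
      obtain ⟨s, hs⟩ := isSquare_padic_of_dvd (l := 3) (u := -34 * 35) 1 (by decide) (by decide)
      refine memS_obstruction hy ℚ_[3] 0 ?_ (fun h => absurd rfl h)
        (fun _ => by simpa using splitSymbol_one) (fun _ => by simpa using splitSymbol_one)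
        (fun _ => splitSymbol_bif _ (h35 3 s hs)) φ
      have hNz : ((N : ℤ) : ZMod 3) = 2 := by
        have := (ZMod.natCast_eq_natCast_iff' N 2 3).2 hN3
        exact_mod_cast this
      have := anisoSymbol_left (l := 3) (u := N) (m := 11) (by rw [hNz]; decide) (by decide)
      norm_num at this
      simpa using this

end Symbols

/-- for primes `p`, `q` satisfying the listed congruence conditions, the
class `(33, 7pq)` does not lie in the `𝔽₂`-span of `(33,33)`, `(33,35)`, `(35,35)`
in `Br(ℚ)`. -/
theorem stmt13 (p q : ℕ)
    (hp : p.Prime) (hq : q.Prime)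
    (hp3 : p % 3 = 2) (hp4 : p % 4 = 3) (hp5 : p % 5 = 2 ∨ p % 5 = 3)
    (hp7 : p % 7 = 1 ∨ p % 7 = 2 ∨ p % 7 = 4)
    (hp11 : p % 11 = 2 ∨ p % 11 = 6 ∨ p % 11 = 7 ∨ p % 11 = 8 ∨ p % 11 = 10)
    (hq3 : q % 3 = 1) (hq4 : q % 4 = 1) (hq5 : q % 5 = 1 ∨ q % 5 = 4)
    (hq7 : q % 7 = 1 ∨ q % 7 = 2 ∨ q % 7 = 4)
    (hq11 : q % 11 = 1 ∨ q % 11 = 3 ∨ q % 11 = 4 ∨ q % 11 = 5 ∨ q % 11 = 9) :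
    ¬ memS 33 (7 * (p : ℚ) * (q : ℚ)) := by

  have hmod : ∀ n a b c : ℕ, p % n = a → q % n = b → 7 % n = c →
      (7 * p * q) % n = c * a * b % n := by
    rintro n a b c rfl rfl rfl
    simp [Nat.mul_mod]
  have h := not_memS_of_residues (7 * p * q) (by simp [hp.ne_zero, hq.ne_zero])
    (hmod 3 _ _ 1 hp3 hq3 rfl)
    (by
      rcases hp5 with h | h <;> rcases hq5 with h' | h' <;> simp [hmod 5 _ _ 2 h h' rfl])
    (by
      rcases hp11 with h | h | h | h | h <;> rcases hq11 with h' | h' | h' | h' | h' <;>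
        simp [hmod 11 _ _ 7 h h' rfl])
  exact_mod_cast h
end
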